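/- arXiv:1901.05143 — 2 statements merged into one kernel-verified Lean document; each statement's English description precedes it below -/
import Mathlib

section
/- Fix a ∈ ℝ and let w₁ be an ω-limit orbit of ũ(·,·;a). Then for every entire solution w of (E) satisfying 0 ≤ w(x,t) ≤ ω(α,t) for all (x,t) ∈ ℝ², w₁ is steeper than w. -/
/-!
The argument is a zero-number argument, carried out through an explicit finite-difference scheme
instead of Sturmian theory. The difference of two solutions of (E) with values in `[0, B]`, multiplied
by `exp (Λ t)` with `Λ` a Lipschitz constant of `f`, solves a linear equation `z_t = z_xx + c z` with
`0 ≤ c ≤ 2 Λ` (`linSol_of_sols`), and such solutions are limits of the explicit scheme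
(`LinSol.converges`).

Let `P` and `N` be the discrete evolutions of the positive and negative parts of the datum. The wedge
`P i * N j - P j * N i` is antisymmetric, and its nonnegativity on `i < j` is preserved by the scheme
(`wedge_evol_compare`). Hence a solution whose datum is first `≥ 0` and then `≤ 0` keeps this sign
pattern. Moreover, if both signs occur, the wedge dominates a combination of wedges of Gaussians
(`gaussWedge_compare`), and passing to the limit shows that at every zero the slope is strictly
negative (`LinSol.strict_slope`). The same comparison without wedges gives the strong maximum
principle (`LinSol.strict_pos`).

The Heaviside solution attains its datum only locally uniformly off `a`, so at a small time its
difference with an entire solution `0 ≤ W ≤ ω(α,·)` has the sign pattern only up to an error; this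
error is bounded by a small constant, a small multiple of `(x - a)²` and a narrow Gaussian at `a`,
all of which stay small under the evolution. Therefore `ũ - W` has the sign pattern at every positive
time (`heaviside_sign`). Applying this to all translates of `w` by integer multiples of the period and
passing to the limit, `w₁ - w(·, · + k T)` has the sign pattern at all times, and `eq_or_steeper`
turns this into the dichotomy in the definition of steepness.
-/

open Real Filter Topology Set

noncomputable section

/-- `u` is a classical solution of `u_t = u_xx + f(t,u)` on `ℝ × I`. -/
def IsSolOn (f : ℝ → ℝ → ℝ) (u : ℝ → ℝ → ℝ) (I : Set ℝ) : Prop :=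
  ∃ ut ux uxx : ℝ → ℝ → ℝ,
    (∀ x : ℝ, ∀ t ∈ I, HasDerivAt (fun s => u x s) (ut x t) t) ∧
    (∀ x : ℝ, ∀ t ∈ I, HasDerivAt (fun y => u y t) (ux x t) x) ∧
    (∀ x : ℝ, ∀ t ∈ I, HasDerivAt (fun y => ux y t) (uxx x t) x) ∧
    ContinuousOn (fun p : ℝ × ℝ => ut p.1 p.2) (Set.univ ×ˢ I) ∧
    ContinuousOn (fun p : ℝ × ℝ => ux p.1 p.2) (Set.univ ×ˢ I) ∧
    ContinuousOn (fun p : ℝ × ℝ => uxx p.1 p.2) (Set.univ ×ˢ I) ∧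
    (∀ x : ℝ, ∀ t ∈ I, ut x t = uxx x t + f t (u x t))

/-- `u₁` is steeper than `u₂` (Definition 2.5). -/
def Steeper (T : ℝ) (u₁ u₂ : ℝ → ℝ → ℝ) : Prop :=
  ∀ (t' x₁ : ℝ) (k : ℤ), u₁ x₁ t' = u₂ x₁ (t' + k * T) →
    (∀ x t : ℝ, u₁ x (t + t') = u₂ x (t + t' + k * T)) ∨
    deriv (fun y => u₁ y t') x₁ < deriv (fun y => u₂ y (t' + k * T)) x₁

/-- `ψ` is a `T`-periodic solution of the ODE `ω' = f(t,ω)`. -/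
def IsPeriodicSol (f : ℝ → ℝ → ℝ) (T : ℝ) (ψ : ℝ → ℝ) : Prop :=
  (∀ t : ℝ, HasDerivAt ψ (f t (ψ t)) t) ∧ ∀ t : ℝ, ψ (t + T) = ψ t

/-- `ψ` is isolated from below w.r.t. the ODE. -/
def IsolatedFromBelow (f : ℝ → ℝ → ℝ) (T : ℝ) (ψ : ℝ → ℝ) : Prop :=
  ¬ ∃ φ : ℕ → ℝ → ℝ, (∀ n, IsPeriodicSol f T (φ n)) ∧ (∀ n t, φ n t < ψ t) ∧
      TendstoUniformly φ ψ atTop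

/-- `ψ` is stable from below w.r.t. the ODE. -/
def StableFromBelow (f : ℝ → ℝ → ℝ) (ψ : ℝ → ℝ) : Prop :=
  ∀ ε > 0, ∃ δ > 0, ∀ g : ℝ → ℝ, (∀ t : ℝ, HasDerivAt g (f t (g t)) t) →
    g 0 ∈ Set.Icc (ψ 0 - δ) (ψ 0) → ∀ t ≥ 0, |g t - ψ t| ≤ ε

/-- Hypothesis (H1). -/
def HypH1 (f : ℝ → ℝ → ℝ) (α : ℝ) (ωα : ℝ → ℝ) : Prop :=
  ∃ u : ℝ → ℝ → ℝ,
    IsSolOn f u (Set.Ioi 0) ∧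
    ContinuousOn (fun p : ℝ × ℝ => u p.1 p.2) (Set.univ ×ˢ Set.Ici 0) ∧
    HasCompactSupport (fun x => u x 0) ∧
    (∀ x : ℝ, 0 ≤ u x 0 ∧ u x 0 < α) ∧
    (∀ K : Set ℝ, IsCompact K → ∀ ε > 0, ∃ t₀ : ℝ, ∀ t ≥ t₀, ∀ x ∈ K, |u x t - ωα t| < ε)

/-- Hypothesis (H2). -/
def HypH2 (f : ℝ → ℝ → ℝ) (T α : ℝ) : Prop :=
  ∀ ψ : ℝ → ℝ, IsPeriodicSol f T ψ → ψ 0 ∈ Set.Ioo 0 α →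
    IsolatedFromBelow f T ψ → ¬ StableFromBelow f ψ →
    ∃ φ : ℕ → ℝ → ℝ,
      (∀ n, ContDiff ℝ 1 (φ n)) ∧
      (∀ n t, φ n (t + T) = φ n t) ∧
      (∀ n t, f t (φ n t) ≤ deriv (φ n) t) ∧
      (∀ n t, φ n t < ψ t) ∧
      TendstoUniformly φ ψ atTop

/-- The solution `ũ(·,·;a)` of (E) with Heaviside-type initial datum `α·H(a−x)`,
bounded between `0` and `ω(α,·)`. -/
def IsHeavisideSol (f : ℝ → ℝ → ℝ) (α a : ℝ) (ωα : ℝ → ℝ) (u : ℝ → ℝ → ℝ) : Prop :=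
  IsSolOn f u (Set.Ioi 0) ∧
  (∀ x : ℝ, ∀ t > 0, 0 ≤ u x t ∧ u x t ≤ ωα t) ∧
  ∀ K : Set ℝ, IsCompact K → a ∉ K → ∀ ε > 0, ∃ δ > 0, ∀ t ∈ Set.Ioo (0:ℝ) δ, ∀ x ∈ K,
    |u x t - α * (if 0 ≤ a - x then 1 else 0)| < ε

/-- `U(x,t) → ψ(t)` as `x → +∞`, locally uniformly in `t`. -/
def LimitAtPlusInf (U : ℝ → ℝ → ℝ) (ψ : ℝ → ℝ) : Prop :=
  ∀ K : Set ℝ, IsCompact K → ∀ ε > 0, ∃ M : ℝ, ∀ x ≥ M, ∀ t ∈ K, |U x t - ψ t| < ε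

/-- `U(x,t) → ψ(t)` as `x → −∞`, locally uniformly in `t`. -/
def LimitAtMinusInf (U : ℝ → ℝ → ℝ) (ψ : ℝ → ℝ) : Prop :=
  ∀ K : Set ℝ, IsCompact K → ∀ ε > 0, ∃ M : ℝ, ∀ x ≤ M, ∀ t ∈ K, |U x t - ψ t| < ε

/-- `U` connects `ωa` (at `x = −∞`) to `ωb` (at `x = +∞`). -/
def Connects (U : ℝ → ℝ → ℝ) (ωa ωb : ℝ → ℝ) : Prop :=
  LimitAtMinusInf U ωa ∧ LimitAtPlusInf U ωb

/-- A pulsating traveling front of (E) with speed `c`, limit `ωa` at `−∞`, `ωb` at `+∞`. -/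
def IsPulsatingFront (f : ℝ → ℝ → ℝ) (T : ℝ) (ωa ωb : ℝ → ℝ) (U : ℝ → ℝ → ℝ) (c : ℝ) :
    Prop :=
  IsSolOn f U Set.univ ∧
  (∃ L : ℝ, c = L / T ∧ ∀ x t : ℝ, U x t = U (x - L) (t + T)) ∧
  Connects U ωa ωb

/-- A propagating terrace of (E) connecting `0` to `ωα`. -/
def IsTerrace (f : ℝ → ℝ → ℝ) (T : ℝ) (ωα : ℝ → ℝ) (N : ℕ)
    (ω : ℕ → ℝ → ℝ) (U : ℕ → ℝ → ℝ → ℝ) (c : ℕ → ℝ) : Prop :=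
  1 ≤ N ∧
  (∀ k ≤ N, IsPeriodicSol f T (ω k)) ∧
  (∀ t, ω 0 t = ωα t) ∧ (∀ t, ω N t = 0) ∧
  (∀ k, k < N → ∀ t, ω (k + 1) t < ω k t) ∧
  (∀ k, 1 ≤ k → k ≤ N → IsPulsatingFront f T (ω (k - 1)) (ω k) (U k) (c k)) ∧
  0 ≤ c 1 ∧ (∀ k, 1 ≤ k → k < N → c k ≤ c (k + 1))

/-- A minimal propagating terrace (Definition 1.4). -/
def IsMinimalTerrace (f : ℝ → ℝ → ℝ) (T : ℝ) (ωα : ℝ → ℝ) (N : ℕ)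
    (ω : ℕ → ℝ → ℝ) (U : ℕ → ℝ → ℝ → ℝ) (c : ℕ → ℝ) : Prop :=
  IsTerrace f T ωα N ω U c ∧
  (∀ (N' : ℕ) (ψ : ℕ → ℝ → ℝ) (V : ℕ → ℝ → ℝ → ℝ) (c' : ℕ → ℝ),
      IsTerrace f T ωα N' ψ V c' → ∀ k ≤ N, ∃ j ≤ N', ∀ t, ω k t = ψ j t) ∧
  (∀ k, 1 ≤ k → k ≤ N → ∀ V : ℝ → ℝ → ℝ, IsSolOn f V Set.univ →
      Connects V (ω (k - 1)) (ω k) → Steeper T (U k) V)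


/-- `w` is an ω-limit orbit of the solution `u`: an entire solution obtained as a locally
uniform limit (together with `u_x`, `u_xx`, `u_t`) of space–time translates
`u(· + x_j, · + k_j T)` with `k_j → ∞`. -/
def IsOmegaLimitOrbit (f : ℝ → ℝ → ℝ) (T : ℝ) (u w : ℝ → ℝ → ℝ) : Prop :=
  IsSolOn f w Set.univ ∧
  ∃ (xj : ℕ → ℝ) (kj : ℕ → ℤ),
    Tendsto kj atTop atTop ∧
    ∀ K : Set (ℝ × ℝ), IsCompact K → ∀ ε > 0, ∃ J : ℕ, ∀ j ≥ J, ∀ p ∈ K,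
      |u (p.1 + xj j) (p.2 + (kj j : ℝ) * T) - w p.1 p.2| < ε ∧
      |deriv (fun y => u y (p.2 + (kj j : ℝ) * T)) (p.1 + xj j) -
        deriv (fun y => w y p.2) p.1| < ε ∧
      |deriv (deriv (fun y => u y (p.2 + (kj j : ℝ) * T))) (p.1 + xj j) -
        deriv (deriv (fun y => w y p.2)) p.1| < ε ∧
      |deriv (fun s => u (p.1 + xj j) s) (p.2 + (kj j : ℝ) * T) -
        deriv (fun s => w p.1 s) p.2| < ε

namespace ZeroNumber

/-! ### The explicit scheme and its two-point wedge -/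

/-- One step of the explicit finite-difference scheme for `z_t = z_xx + c z` on the grid `ℤ`:
`l` is the mesh ratio `τ / h²` and `κ = τ c` is the discretised zeroth order coefficient. -/
def step (l : ℝ) (κ v : ℤ → ℝ) (i : ℤ) : ℝ :=
  (1 - 2 * l + κ i) * v i + l * (v (i + 1) + v (i - 1))

/-- The values after `m` steps of the scheme started from `v`; `κ k` is used in step `k`. -/
def evol (l : ℝ) (κ : ℕ → ℤ → ℝ) (v : ℤ → ℝ) : ℕ → ℤ → ℝ
  | 0 => v
  | m + 1 => step l (κ m) (evol l κ v m)

lemma evol_sub (l : ℝ) (κ : ℕ → ℤ → ℝ) (v w : ℤ → ℝ) (m : ℕ) (i : ℤ) :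
    evol l κ (fun j => v j - w j) m i = evol l κ v m i - evol l κ w m i := by
  induction m generalizing i with
  | zero => rfl
  | succ m ih => simp only [evol, step, ih]; ring

lemma evol_add (l : ℝ) (κ : ℕ → ℤ → ℝ) (v w : ℤ → ℝ) (m : ℕ) (i : ℤ) :
    evol l κ (fun j => v j + w j) m i = evol l κ v m i + evol l κ w m i := by
  induction m generalizing i with
  | zero => rfl
  | succ m ih => simp only [evol, step, ih]; ring

lemma evol_smul (l : ℝ) (κ : ℕ → ℤ → ℝ) (r : ℝ) (v : ℤ → ℝ) (m : ℕ) (i : ℤ) :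
    evol l κ (fun j => r * v j) m i = r * evol l κ v m i := by
  induction m generalizing i with
  | zero => rfl
  | succ m ih => simp only [evol, step, ih]; ring

lemma evol_const (l : ℝ) (r : ℝ) (m : ℕ) (i : ℤ) :
    evol l (fun _ _ => 0) (fun _ => r) m i = r := by
  induction m generalizing i with
  | zero => rfl
  | succ m ih => simp only [evol, step, ih]; ring

lemma evol_sq (l h y : ℝ) (m : ℕ) (i : ℤ) :
    evol l (fun _ _ => 0) (fun j => (y + h * j) ^ 2) m i
      = (y + h * i) ^ 2 + 2 * m * (l * h ^ 2) := by
  induction m generalizing i with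
  | zero => simp [evol]
  | succ m ih => simp only [evol, step, ih]; push_cast; ring

lemma step_mono {l : ℝ} (hl : 0 ≤ l) (hl' : l ≤ 1 / 4) {κ κ' v w : ℤ → ℝ}
    (hκ : ∀ i, 0 ≤ κ' i) (hκκ : ∀ i, κ' i ≤ κ i) (hv : ∀ i, 0 ≤ v i) (hvw : ∀ i, w i ≤ v i)
    (i : ℤ) : step l κ' w i ≤ step l κ v i := by
  unfold step
  have h1 : 0 ≤ 1 - 2 * l + κ' i := by linarith [hκ i]
  have h2 := mul_le_mul_of_nonneg_left (hvw i) h1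
  have h3 := mul_nonneg (sub_nonneg.2 (hκκ i)) (hv i)
  have h4 := mul_le_mul_of_nonneg_left (add_le_add (hvw (i + 1)) (hvw (i - 1))) hl
  nlinarith

lemma evol_nonneg {l : ℝ} (hl : 0 ≤ l) (hl' : l ≤ 1 / 4) {κ : ℕ → ℤ → ℝ}
    (hκ : ∀ k i, 0 ≤ κ k i) {v : ℤ → ℝ} (hv : ∀ i, 0 ≤ v i) (m : ℕ) (i : ℤ) :
    0 ≤ evol l κ v m i := by
  induction m generalizing i with
  | zero => exact hv i
  | succ m ih =>
    simp only [evol]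
    simpa [step] using step_mono hl hl' (hκ m) (fun i => le_refl _) ih ih (w := fun _ => 0) i

/-- Comparison principle: a nonnegative solution of the scheme with `κ ≥ 0` dominates any solution of
the discrete heat equation which it dominates initially. -/
lemma evol_compare {l : ℝ} (hl : 0 ≤ l) (hl' : l ≤ 1 / 4) {κ : ℕ → ℤ → ℝ}
    (hκ : ∀ k i, 0 ≤ κ k i) {v w : ℤ → ℝ} (hv : ∀ i, 0 ≤ v i) (hvw : ∀ i, w i ≤ v i)
    (m : ℕ) (i : ℤ) : evol l (fun _ _ => 0) w m i ≤ evol l κ v m i := by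
  induction m generalizing i with
  | zero => exact hvw i
  | succ m ih =>
    exact step_mono hl hl' (fun _ => le_refl _) (hκ m) (evol_nonneg hl hl' hκ hv m) ih i

lemma abs_step_le {l : ℝ} (hl : 0 ≤ l) (hl' : l ≤ 1 / 4) {κ v w : ℤ → ℝ}
    (hκ : ∀ i, 0 ≤ κ i) (hvw : ∀ i, |v i| ≤ w i) (i : ℤ) :
    |step l κ v i| ≤ step l κ w i := by
  have hw : ∀ i, 0 ≤ w i := fun i => (abs_nonneg _).trans (hvw i)
  rw [abs_le]
  constructor
  · have := step_mono hl hl' hκ (fun _ => le_refl _) hw (w := fun i => - v i)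
      (fun i => (neg_le_abs _).trans (hvw i)) i
    simp only [step] at this ⊢
    linarith
  · exact step_mono hl hl' hκ (fun _ => le_refl _) hw (fun i => (le_abs_self _).trans (hvw i)) i

/-- Domination by the discrete heat equation, at the cost of the factor `1 + 2 q` per step, where `q`
bounds `κ`. -/
lemma abs_evol_le {l : ℝ} (hl : 0 ≤ l) (hl' : l ≤ 1 / 4) {κ : ℕ → ℤ → ℝ} {q : ℝ}
    (hκ : ∀ k i, 0 ≤ κ k i) (hq : ∀ k i, κ k i ≤ q) {v w : ℤ → ℝ}
    (hvw : ∀ i, |v i| ≤ w i) (m : ℕ) (i : ℤ) :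
    |evol l κ v m i| ≤ (1 + 2 * q) ^ m * evol l (fun _ _ => 0) w m i := by
  have hw : ∀ i, 0 ≤ w i := fun i => (abs_nonneg _).trans (hvw i)
  have hq0 : 0 ≤ q := (hκ 0 0).trans (hq 0 0)
  induction m generalizing i with
  | zero => simpa [evol] using hvw i
  | succ m ih =>
    refine (abs_step_le hl hl' (hκ m) ih i).trans ?_
    have hpos := evol_nonneg hl hl' (κ := fun _ _ => 0) (fun _ _ => le_refl _) hw m
    have hp : 0 ≤ (1 + 2 * q) ^ m := by positivity
    simp only [evol, step, pow_succ]
    set e := evol l (fun _ _ => 0) w m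
    -- the diagonal weight is at least one half, so the zeroth order term is absorbed by `1 + 2q`
    have key : (1 - 2 * l + κ m i) * e i + l * (e (i + 1) + e (i - 1))
        ≤ (1 + 2 * q) * ((1 - 2 * l + 0) * e i + l * (e (i + 1) + e (i - 1))) := by
      have h1 := mul_le_mul_of_nonneg_right (hq m i) (hpos i)
      have h2 : 0 ≤ q * (1 - 4 * l) * e i :=
        mul_nonneg (mul_nonneg hq0 (by linarith)) (hpos i)
      have h3 : 0 ≤ q * (l * (e (i + 1) + e (i - 1))) :=
        mul_nonneg hq0 (mul_nonneg hl (add_nonneg (hpos _) (hpos _)))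
      nlinarith
    calc _ = (1 + 2 * q) ^ m * ((1 - 2 * l + κ m i) * e i + l * (e (i + 1) + e (i - 1))) := by ring
      _ ≤ (1 + 2 * q) ^ m * ((1 + 2 * q) *
          ((1 - 2 * l + 0) * e i + l * (e (i + 1) + e (i - 1)))) :=
        mul_le_mul_of_nonneg_left key hp
      _ = _ := by ring

/-- The scheme applied in both variables of a two-point function. -/
def step₂ (l : ℝ) (κ : ℤ → ℝ) (D : ℤ → ℤ → ℝ) (i j : ℤ) : ℝ :=
  step l κ (fun k => step l κ (fun n => D k n) j) i

/-- Maximum principle on the half-plane `i < j` for antisymmetric functions: since `D` vanishes on the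
diagonal, stepping both variables preserves nonnegativity. This is the discrete form of the
Karlin–McGregor non-crossing argument. -/
lemma step₂_zero_nonneg {l : ℝ} (hl : 0 ≤ l) (hl' : l ≤ 1 / 4) {D : ℤ → ℤ → ℝ}
    (ha : ∀ i j, D j i = - D i j) (hD : ∀ i j, i < j → 0 ≤ D i j) {i j : ℤ} (hij : i < j) :
    0 ≤ step₂ l (fun _ => 0) D i j := by
  have hd : ∀ i, D i i = 0 := fun i => by linarith [ha i i]
  have hD' : ∀ i j, i ≤ j → 0 ≤ D i j := fun i j h => by
    rcases h.eq_or_lt with h | h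
    · subst h; exact (hd i).ge
    · exact hD i j h
  have h2 : 0 ≤ 1 - 2 * l := by linarith
  have e : step₂ l (fun _ => 0) D i j
      = (1 - 2 * l) * (1 - 2 * l) * D i j + (1 - 2 * l) * l * (D i (j + 1) + D i (j - 1))
        + l * (1 - 2 * l) * (D (i + 1) j + D (i - 1) j)
        + l * l * (D (i + 1) (j + 1) + D (i + 1) (j - 1) + D (i - 1) (j + 1)
          + D (i - 1) (j - 1)) := by
    simp only [step₂, step]; ring
  rw [e]
  have a1 := hD' i (j + 1) (by lia)
  have a2 := hD' i (j - 1) (by lia)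
  have a3 := hD' (i + 1) j (by lia)
  have a4 := hD' (i - 1) j (by lia)
  have a5 := hD' (i + 1) (j + 1) (by lia)
  have a6 := hD' (i - 1) (j + 1) (by lia)
  have a7 := hD' (i - 1) (j - 1) (by lia)
  have a8 := hD i j hij
  -- the only neighbour that may cross the diagonal is absorbed by the central one
  have a9 : 0 ≤ (1 - 2 * l) * (1 - 2 * l) * D i j + l * l * D (i + 1) (j - 1) := by
    rcases (show i + 1 ≤ j from hij).eq_or_lt with h | h
    · subst h
      rw [add_sub_cancel_right, ha i (i + 1)]
      have : l * l ≤ (1 - 2 * l) * (1 - 2 * l) := by nlinarith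
      nlinarith
    · have := hD' (i + 1) (j - 1) (by lia)
      positivity
  have b1 : 0 ≤ (1 - 2 * l) * l * (D i (j + 1) + D i (j - 1)) := by positivity
  have b2 : 0 ≤ l * (1 - 2 * l) * (D (i + 1) j + D (i - 1) j) := by positivity
  have b3 : 0 ≤ l * l * (D (i + 1) (j + 1) + D (i - 1) (j + 1) + D (i - 1) (j - 1)) := by
    positivity
  nlinarith

/-- On antisymmetric functions that are nonnegative for `i < j`, nonnegative potentials increase
the two-point step. -/
lemma step₂_zero_le {l : ℝ} (hl : 0 ≤ l) (hl' : l ≤ 1 / 4) {κ : ℤ → ℝ} (hκ : ∀ i, 0 ≤ κ i)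
    {D : ℤ → ℤ → ℝ}
    (ha : ∀ i j, D j i = - D i j) (hD : ∀ i j, i < j → 0 ≤ D i j) {i j : ℤ} (hij : i < j) :
    step₂ l (fun _ => 0) D i j ≤ step₂ l κ D i j := by
  have hd : ∀ i, D i i = 0 := fun i => by linarith [ha i i]
  have hD' : ∀ i j, i ≤ j → 0 ≤ D i j := fun i j h => by
    rcases h.eq_or_lt with h | h
    · subst h; exact (hd i).ge
    · exact hD i j h
  have h2 : 0 ≤ 1 - 2 * l := by linarith
  have a1 := hD' i (j + 1) (by lia)
  have a2 := hD' i (j - 1) (by lia)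
  have a3 := hD' (i + 1) j (by lia)
  have a4 := hD' (i - 1) j (by lia)
  have a8 := hD i j hij
  have k1 := hκ i
  have k2 := hκ j
  have e : step₂ l κ D i j - step₂ l (fun _ => 0) D i j
      = κ i * ((1 - 2 * l) * D i j + l * (D i (j + 1) + D i (j - 1)))
        + κ j * ((1 - 2 * l) * D i j + l * (D (i + 1) j + D (i - 1) j))
        + κ i * κ j * D i j := by
    simp only [step₂, step]; ring
  have : 0 ≤ step₂ l κ D i j - step₂ l (fun _ => 0) D i j := by rw [e]; positivity
  linarith

/-- The two-point determinant `P i * N j - P j * N i`. -/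
def wedge (P N : ℤ → ℝ) (i j : ℤ) : ℝ := P i * N j - P j * N i

lemma wedge_step (l : ℝ) (κ P N : ℤ → ℝ) (i j : ℤ) :
    wedge (step l κ P) (step l κ N) i j = step₂ l κ (wedge P N) i j := by
  simp only [wedge, step₂, step]; ring

/-- If the wedge of `P` and `N` is nonnegative for `i < j` and dominates a combination of two other
wedges, then both properties persist when `P`, `N` evolve with a potential `κ ≥ 0` and the other
data evolve by the discrete heat equation. -/
lemma wedge_evol_compare {l : ℝ} (hl : 0 ≤ l) (hl' : l ≤ 1 / 4) {κ : ℕ → ℤ → ℝ}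
    (hκ : ∀ k i, 0 ≤ κ k i) {P N p q p' q' : ℤ → ℝ} {A r : ℝ}
    (h0 : ∀ i j, i < j → 0 ≤ wedge P N i j)
    (hB : ∀ i j, i < j → r * (A * wedge p q i j - wedge p' q' i j) ≤ wedge P N i j)
    (m : ℕ) : ∀ i j, i < j → 0 ≤ wedge (evol l κ P m) (evol l κ N m) i j ∧
      r * (A * wedge (evol l (fun _ _ => 0) p m) (evol l (fun _ _ => 0) q m) i j
        - wedge (evol l (fun _ _ => 0) p' m) (evol l (fun _ _ => 0) q' m) i j)
        ≤ wedge (evol l κ P m) (evol l κ N m) i j := by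
  induction m with
  | zero => exact fun i j h => ⟨h0 i j h, hB i j h⟩
  | succ m ih =>
    intro i j hij
    simp only [evol, wedge_step]
    set D := wedge (evol l κ P m) (evol l κ N m) with hD
    set B₁ := wedge (evol l (fun _ _ => 0) p m) (evol l (fun _ _ => 0) q m) with hB₁
    set B₂ := wedge (evol l (fun _ _ => 0) p' m) (evol l (fun _ _ => 0) q' m) with hB₂
    have ha : ∀ i j, D j i = - D i j := fun i j => by simp only [hD, wedge]; ring
    have hmono := step₂_zero_le hl hl' (hκ m) ha (fun i j h => (ih i j h).1) hij
    have hpos := step₂_zero_nonneg hl hl' ha (fun i j h => (ih i j h).1) hij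
    have hdiff := step₂_zero_nonneg hl hl' (D := fun i j => D i j - r * (A * B₁ i j - B₂ i j))
      (fun i j => by simp only [hD, hB₁, hB₂, wedge]; ring)
      (fun i j h => sub_nonneg.2 (ih i j h).2) hij
    have e : step₂ l (fun _ => 0) (fun i j => D i j - r * (A * B₁ i j - B₂ i j)) i j
        = step₂ l (fun _ => 0) D i j - r * (A * step₂ l (fun _ => 0) B₁ i j
          - step₂ l (fun _ => 0) B₂ i j) := by
      simp only [step₂, step]; ring
    rw [e] at hdiff
    exact ⟨hpos.trans hmono, by linarith⟩

/-! ### Linear parabolic equations and convergence of the scheme -/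

/-- `z` is a classical solution, bounded by `M`, of `z_t = z_xx + c z` on `ℝ × [0, T]` with
`0 ≤ c ≤ K`. The time derivative at the end points is two-sided, and `c` is not required to be
continuous: only the continuity of `z_t` and `z_xx` is used. -/
structure LinSol (K M T : ℝ) (z c : ℝ → ℝ → ℝ) : Prop where
  bound : ∀ x, ∀ t ∈ Icc 0 T, |z x t| ≤ M
  c_nonneg : ∀ x t, 0 ≤ c x t
  c_le : ∀ x t, c x t ≤ K
  sol : ∃ zt zx zxx : ℝ → ℝ → ℝ,
    (∀ x, ∀ t ∈ Icc 0 T, HasDerivAt (fun s => z x s) (zt x t) t) ∧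
    (∀ x, ∀ t ∈ Icc 0 T, HasDerivAt (fun y => z y t) (zx x t) x) ∧
    (∀ x, ∀ t ∈ Icc 0 T, HasDerivAt (fun y => zx y t) (zxx x t) x) ∧
    ContinuousOn (fun p : ℝ × ℝ => zt p.1 p.2) (univ ×ˢ Icc 0 T) ∧
    ContinuousOn (fun p : ℝ × ℝ => zxx p.1 p.2) (univ ×ˢ Icc 0 T) ∧
    ∀ x, ∀ t ∈ Icc 0 T, zt x t = zxx x t + c x t * z x t

/-- The second difference quotient approximates the second derivative up to twice its oscillation. -/
lemma second_diff {g g' g'' : ℝ → ℝ} {x h η : ℝ} (hh : 0 < h)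
    (hg : ∀ y, HasDerivAt g (g' y) y) (hg' : ∀ y, HasDerivAt g' (g'' y) y)
    (hη : ∀ y, |y - x| ≤ h → |g'' y - g'' x| ≤ η) :
    |g (x + h) + g (x - h) - 2 * g x - h ^ 2 * g'' x| ≤ 2 * η * h ^ 2 := by
  have hη0 : 0 ≤ η := by simpa using hη x (by simpa using hh.le)
  have plus : ∀ {k k' : ℝ → ℝ}, (∀ y, HasDerivAt k (k' y) y) → ∀ s,
      HasDerivAt (fun s => k (x + s)) (k' (x + s)) s := fun hk s => by
    simpa using (hk (x + s)).comp_const_add x s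
  have minus : ∀ {k k' : ℝ → ℝ}, (∀ y, HasDerivAt k (k' y) y) → ∀ s,
      HasDerivAt (fun s => k (x - s)) (-k' (x - s)) s := fun hk s => by
    simpa using (hk (x - s)).comp_const_sub x s
  have h1 : ∀ s ∈ Icc 0 h, |g' (x + s) - g' (x - s) - 2 * s * g'' x| ≤ 2 * η * h := by
    intro s hs
    have := (convex_Icc 0 h).norm_image_sub_le_of_norm_hasDerivWithin_le
      (f := fun s => g' (x + s) - g' (x - s) - 2 * s * g'' x)
      (f' := fun s => g'' (x + s) - -g'' (x - s) - 2 * 1 * g'' x) (C := 2 * η)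
      (fun s _ => (((plus hg' s).sub (minus hg' s)).sub
        (((hasDerivAt_id s).const_mul 2).mul_const _)).hasDerivWithinAt)
      (fun s hs => by
        have a := hη (x + s) (by rw [add_sub_cancel_left, abs_of_nonneg hs.1]; exact hs.2)
        have b := hη (x - s) (by
          rw [sub_sub_cancel_left, abs_neg, abs_of_nonneg hs.1]; exact hs.2)
        rw [Real.norm_eq_abs]
        rw [abs_le] at *
        constructor <;> linarith [a.1, a.2, b.1, b.2])
      (left_mem_Icc.2 hh.le) hs
    simp only [Real.norm_eq_abs, add_zero, sub_zero, sub_self, mul_zero, zero_mul] at this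
    rw [abs_of_nonneg hs.1] at this
    exact this.trans (by nlinarith [hs.1, hs.2])
  have := (convex_Icc 0 h).norm_image_sub_le_of_norm_hasDerivWithin_le
      (f := fun s => g (x + s) + g (x - s) - s ^ 2 * g'' x)
      (f' := fun s => g' (x + s) + -g' (x - s) - (2 * s ^ (2 - 1) * 1) * g'' x) (C := 2 * η * h)
      (fun s _ => (((plus hg s).add (minus hg s)).sub
        (((hasDerivAt_id s).pow 2).mul_const _)).hasDerivWithinAt)
      (fun s hs => by
        rw [Real.norm_eq_abs]
        convert h1 s hs using 2
        ring)
      (left_mem_Icc.2 hh.le) (right_mem_Icc.2 hh.le)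
  simp only [Real.norm_eq_abs, add_zero, sub_zero] at this
  rw [abs_of_pos hh] at this
  calc _ = |g (x + h) + g (x - h) - h ^ 2 * g'' x - (g x + g x - 0 ^ 2 * g'' x)| := by
        congr 1; ring
    _ ≤ _ := this
    _ = _ := by ring

/-- The coefficient `τ c` sampled on the space-time grid with origin `(x₀, 0)`, mesh width `h` and time
step `τ`. -/
def pot (c : ℝ → ℝ → ℝ) (x₀ h τ : ℝ) (k : ℕ) (i : ℤ) : ℝ := τ * c (x₀ + h * i) (k * τ)

lemma one_add_pow_le {K T : ℝ} (hK : 0 ≤ K) (hT : 0 ≤ T) {m k : ℕ} (hk : k ≤ m) (hm : 0 < m) :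
    (1 + K * (T / m)) ^ k ≤ exp (K * T) := by
  have hm' : (0 : ℝ) < m := by exact_mod_cast hm
  calc (1 + K * (T / m)) ^ k ≤ (1 + K * (T / m)) ^ m :=
        pow_le_pow_right₀ (by have : 0 ≤ K * (T / m) := by positivity
                              linarith) hk
    _ ≤ (exp (K * (T / m))) ^ m := by
        gcongr
        rw [add_comm]; exact add_one_le_exp _
    _ = exp (K * T) := by
        rw [← exp_nat_mul]; congr 1; field_simp

/-- Consistency: on a bounded set the one-step error of the scheme is `o(τ)`. -/
lemma LinSol.consistency {K M T : ℝ} {z c : ℝ → ℝ → ℝ} (hz : LinSol K M T z c)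
    (x₀ R : ℝ) {η : ℝ} (hη : 0 < η) : ∃ h₀ > (0 : ℝ), ∀ h : ℝ, 0 < h → h < h₀ →
      ∀ τ : ℝ, 0 < τ → τ ≤ h ^ 2 / 4 → ∀ (k : ℕ) (i : ℤ), (k + 1) * τ ≤ T → |h * i| ≤ R →
      |step (τ / h ^ 2) (pot c x₀ h τ k) (fun j => z (x₀ + h * j) (k * τ)) i
        - z (x₀ + h * i) ((k + 1) * τ)| ≤ η * τ := by
  obtain ⟨zt, zx, zxx, ht, hx, hxx, ct, cxx, heq⟩ := hz.sol
  have hcomp : IsCompact (Icc (x₀ - R - 1) (x₀ + R + 1) ×ˢ Icc 0 T) :=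
    isCompact_Icc.prod isCompact_Icc
  have hsub : Icc (x₀ - R - 1) (x₀ + R + 1) ×ˢ Icc 0 T ⊆ univ ×ˢ Icc 0 T :=
    prod_mono (subset_univ _) subset_rfl
  have u1 := Metric.uniformContinuousOn_iff.1
    (hcomp.uniformContinuousOn_of_continuous (ct.mono hsub)) (η / 3) (by positivity)
  have u2 := Metric.uniformContinuousOn_iff.1
    (hcomp.uniformContinuousOn_of_continuous (cxx.mono hsub)) (η / 3) (by positivity)
  obtain ⟨δ₁, hδ₁, u1⟩ := u1
  obtain ⟨δ₂, hδ₂, u2⟩ := u2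
  refine ⟨min 1 (min δ₁ δ₂), by positivity, fun h hh hlt τ hτ hτh k i hk hi => ?_⟩
  have l0 : h < 1 := hlt.trans_le (min_le_left _ _)
  have l1 : h < δ₁ := hlt.trans_le ((min_le_right _ _).trans (min_le_left _ _))
  have l2 : h < δ₂ := hlt.trans_le ((min_le_right _ _).trans (min_le_right _ _))
  have hτ' : τ < h := by nlinarith
  rw [abs_le] at hi
  set x := x₀ + h * i with hxdef
  set t := k * τ with htdef
  have ht0 : 0 ≤ t := by positivity
  have htT : t + τ ≤ T := by rw [htdef]; linarith
  have htm : t ∈ Icc 0 T := ⟨ht0, by linarith⟩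
  have hxm : x ∈ Icc (x₀ - R - 1) (x₀ + R + 1) := ⟨by linarith [hi.1], by linarith [hi.2]⟩
  have A : |z x (t + τ) - z x t - τ * zt x t| ≤ η / 3 * τ := by
    have := (convex_Icc t (t + τ)).norm_image_sub_le_of_norm_hasDerivWithin_le
      (f := fun s => z x s - s * zt x t) (f' := fun s => zt x s - 1 * zt x t) (C := η / 3)
      (fun s hs => ((ht x s ⟨by linarith [hs.1], by linarith [hs.2]⟩).sub
        ((hasDerivAt_id s).mul_const _)).hasDerivWithinAt)
      (fun s hs => by
        have := u1 (x, s) ⟨hxm, ⟨by linarith [hs.1], by linarith [hs.2]⟩⟩ (x, t) ⟨hxm, htm⟩ (by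
          rw [Prod.dist_eq]
          simp only [dist_self]
          rw [Real.dist_eq, abs_of_nonneg (by linarith [hs.1])]
          exact max_lt hδ₁ (by linarith [hs.2]))
        rw [Real.dist_eq] at this
        rw [one_mul, Real.norm_eq_abs]
        exact this.le)
      (left_mem_Icc.2 (by linarith)) (right_mem_Icc.2 (by linarith))
    simp only [Real.norm_eq_abs, add_sub_cancel_left, abs_of_pos hτ] at this
    convert this using 2
    ring
  have B := second_diff (g := fun y => z y t) (g' := fun y => zx y t) (g'' := fun y => zxx y t)
    (x := x) (η := η / 3) hh (fun y => hx y t htm) (fun y => hxx y t htm) (fun y hy => by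
      have hy' := abs_le.1 hy
      have := u2 (y, t) ⟨⟨by linarith [hi.1, hy'.1], by linarith [hi.2, hy'.2]⟩, htm⟩
        (x, t) ⟨hxm, htm⟩ (by
          rw [Prod.dist_eq]
          simp only [dist_self]
          rw [Real.dist_eq]
          exact max_lt (by linarith) hδ₂)
      rw [Real.dist_eq] at this
      exact this.le)
  have C : |τ / h ^ 2 * (z (x + h) t + z (x - h) t - 2 * z x t - h ^ 2 * zxx x t)|
      ≤ 2 * (η / 3) * τ := by
    rw [abs_mul, abs_of_pos (by positivity)]
    calc _ ≤ τ / h ^ 2 * (2 * (η / 3) * h ^ 2) := by gcongr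
      _ = _ := by field_simp
  have e1 : x₀ + h * ((i + 1 : ℤ) : ℝ) = x + h := by rw [hxdef]; push_cast; ring
  have e2 : x₀ + h * ((i - 1 : ℤ) : ℝ) = x - h := by rw [hxdef]; push_cast; ring
  have e3 : ((k : ℝ) + 1) * τ = t + τ := by rw [htdef]; ring
  simp only [step, pot, e1, e2, e3, ← hxdef, ← htdef]
  have hE := heq x t htm
  have hh2 : τ / h ^ 2 * h ^ 2 = τ := by field_simp
  have e4 : (1 - 2 * (τ / h ^ 2) + τ * c x t) * z x t + τ / h ^ 2 * (z (x + h) t + z (x - h) t)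
      - z x (t + τ) = τ / h ^ 2 * (z (x + h) t + z (x - h) t - 2 * z x t - h ^ 2 * zxx x t)
        - (z x (t + τ) - z x t - τ * zt x t) := by
    rw [hE]; linear_combination (zxx x t) * hh2
  rw [e4]
  refine (abs_sub _ _).trans ?_
  linarith

/-- Local uniform convergence of the scheme. The error is controlled inside a large ball by
consistency and outside by the global bound on `z`, both absorbed into a barrier of the form
`γ t + B / R² (x² + 2 t)`, which is a supersolution of the scheme up to the factor
`(1 + K τ) ^ k`. -/
lemma LinSol.converges {K M T : ℝ} {z c : ℝ → ℝ → ℝ} (hz : LinSol K M T z c) (hT : 0 < T)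
    (x₀ ρ : ℝ) {η : ℝ} (hη : 0 < η) : ∃ h₀ > (0 : ℝ), ∀ h : ℝ, 0 < h → h < h₀ →
      ∀ m : ℕ, 0 < m → T / m ≤ h ^ 2 / 4 → ∀ i : ℤ, |h * i| ≤ ρ →
      |evol (T / m / h ^ 2) (pot c x₀ h (T / m)) (fun j => z (x₀ + h * j) 0) m i
        - z (x₀ + h * i) T| ≤ η := by
  have hK : 0 ≤ K := (hz.c_nonneg 0 0).trans (hz.c_le 0 0)
  have hM : 0 ≤ M := (abs_nonneg _).trans (hz.bound 0 0 ⟨le_rfl, hT.le⟩)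
  set B := exp (2 * K * T) * M + M with hB
  have hB0 : 0 ≤ B := by positivity
  -- the radius is chosen so that the quadratic barrier is at most `η / 2` at the observed points
  obtain ⟨R, hR, hRη⟩ : ∃ R : ℝ, 0 < R ∧
      exp (K * T) * (B / R ^ 2 * (ρ ^ 2 + 2 * T)) ≤ η / 2 := by
    have : Tendsto (fun R : ℝ => exp (K * T) * (B / R ^ 2 * (ρ ^ 2 + 2 * T))) atTop
        (𝓝 (exp (K * T) * (0 * (ρ ^ 2 + 2 * T)))) :=
      ((tendsto_const_nhds.div_atTop (tendsto_pow_atTop two_ne_zero)).mul_const _).const_mul _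
    rw [zero_mul, mul_zero] at this
    obtain ⟨R, h1, h2⟩ :=
      ((this.eventually (ge_mem_nhds (half_pos hη))).and (eventually_gt_atTop 0)).exists
    exact ⟨R, h2, h1⟩
  have hE : 0 < exp (K * T) := exp_pos _
  set η' := η / (2 * exp (K * T) * T) with hη'
  have hη'0 : 0 < η' := by positivity
  obtain ⟨h₀, hh₀, hc⟩ := hz.consistency x₀ R hη'0
  refine ⟨h₀, hh₀, fun h hh hlt m hm hmh i hi => ?_⟩
  have hm' : (0 : ℝ) < m := by exact_mod_cast hm
  set τ := T / m with hτdef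
  have hτ : 0 < τ := by positivity
  have hmτ : m * τ = T := by rw [hτdef]; field_simp
  set l := τ / h ^ 2 with hldef
  have hl : 0 ≤ l := by positivity
  have hl' : l ≤ 1 / 4 := by rw [hldef, div_le_iff₀ (by positivity)]; linarith
  have hlh : l * h ^ 2 = τ := by rw [hldef]; field_simp
  set κ := pot c x₀ h τ with hκdef
  have hκ : ∀ k i, 0 ≤ κ k i := fun k i => mul_nonneg hτ.le (hz.c_nonneg _ _)
  have hκK : ∀ k i, κ k i ≤ K * τ := fun k i => by
    rw [mul_comm K]; exact mul_le_mul_of_nonneg_left (hz.c_le _ _) hτ.le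
  set v : ℤ → ℝ := fun j => z (x₀ + h * j) 0 with hv
  have hglob : ∀ k ≤ m, ∀ i : ℤ, |evol l κ v k i - z (x₀ + h * i) (k * τ)| ≤ B := by
    intro k hk i
    have h1 := abs_evol_le hl hl' hκ hκK (v := v) (w := fun _ => M)
      (fun i => hz.bound _ 0 ⟨le_rfl, hT.le⟩) k i
    rw [evol_const] at h1
    have h2 : (1 + 2 * (K * τ)) ^ k ≤ exp (2 * K * T) := by
      have := one_add_pow_le (K := 2 * K) (by positivity) hT.le hk hm
      rwa [mul_assoc 2 K (T / m)] at this
    have h3 := hz.bound (x₀ + h * i) (k * τ) ⟨by positivity, by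
      rw [← hmτ]; gcongr⟩
    have h4 := mul_le_mul_of_nonneg_right h2 hM
    exact (abs_sub _ _).trans (by rw [hB]; linarith)
  have main : ∀ k ≤ m, ∀ i : ℤ, |evol l κ v k i - z (x₀ + h * i) (k * τ)|
      ≤ (1 + K * τ) ^ k * (η' * (k * τ) + B / R ^ 2 * ((h * i) ^ 2 + 2 * (k * τ))) := by
    intro k
    induction k with
    | zero =>
      intro _ i
      simp only [evol, hv, CharP.cast_eq_zero, zero_mul, sub_self, abs_zero, pow_zero]
      positivity
    | succ k ih =>
      intro hk i
      have hp : 1 ≤ (1 + K * τ) ^ (k + 1) := one_le_pow₀ (by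
        have : 0 ≤ K * τ := by positivity
        linarith)
      by_cases hiR : |h * i| ≤ R
      · have hk1 : ((k : ℝ) + 1) * τ ≤ T := by
          rw [← hmτ]; gcongr; exact_mod_cast hk
        have t1 := hc h hh hlt τ hτ hmh k i hk1 hiR
        set b : ℤ → ℝ := fun i => (1 + K * τ) ^ k *
          (η' * (k * τ) + B / R ^ 2 * ((h * i) ^ 2 + 2 * (k * τ))) with hb
        have t2 := abs_step_le hl hl' (hκ k)
          (v := fun i => evol l κ v k i - z (x₀ + h * i) (k * τ)) (w := b)
          (ih (by lia)) i
        have hb0 : 0 ≤ b i := by simp only [hb]; positivity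
        have t3 : step l (κ k) b i ≤ (1 + K * τ) ^ (k + 1) *
            (η' * (k * τ) + B / R ^ 2 * ((h * i) ^ 2 + 2 * (k * τ)))
            + (1 + K * τ) ^ k * (B / R ^ 2 * (2 * τ)) := by
          have : step l (κ k) b i = (1 + κ k i) * b i
              + (1 + K * τ) ^ k * (B / R ^ 2 * (2 * (l * h ^ 2))) := by
            simp only [step, hb]; push_cast; ring
          rw [this, hlh, pow_succ (1 + K * τ) k]
          have := mul_le_mul_of_nonneg_right (hκK k i) hb0
          simp only [hb] at this ⊢
          linarith
        have e : evol l κ v (k + 1) i - z (x₀ + h * i) (((k + 1 : ℕ) : ℝ) * τ)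
            = step l (κ k) (fun i => evol l κ v k i - z (x₀ + h * i) (k * τ)) i
              + (step l (κ k) (fun i => z (x₀ + h * i) (k * τ)) i
                - z (x₀ + h * i) ((k + 1) * τ)) := by
          simp only [evol, step]; push_cast; ring
        rw [e]
        refine (abs_add_le _ _).trans ?_
        have s1 : (1 + K * τ) ^ k * (B / R ^ 2 * (2 * τ))
            ≤ (1 + K * τ) ^ (k + 1) * (B / R ^ 2 * (2 * τ)) := by
          gcongr
          · have : 0 ≤ K * τ := by positivity
            linarith
          · lia
        have s2 : η' * τ ≤ (1 + K * τ) ^ (k + 1) * (η' * τ) := by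
          have : 0 ≤ η' * τ := by positivity
          nlinarith
        push_cast
        have s3 : (1 + K * τ) ^ (k + 1) * (η' * ((k + 1) * τ)
            + B / R ^ 2 * ((h * i) ^ 2 + 2 * ((k + 1) * τ)))
            = (1 + K * τ) ^ (k + 1) *
            (η' * (k * τ) + B / R ^ 2 * ((h * i) ^ 2 + 2 * (k * τ)))
            + (1 + K * τ) ^ (k + 1) * (B / R ^ 2 * (2 * τ))
            + (1 + K * τ) ^ (k + 1) * (η' * τ) := by ring
        rw [s3]
        linarith
      · -- outside the ball of radius `R` the barrier exceeds the global bound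
        refine (hglob (k + 1) hk i).trans ?_
        have h1 : R ^ 2 ≤ (h * i) ^ 2 := by
          rw [← sq_abs (h * i)]
          exact pow_le_pow_left₀ hR.le (not_le.1 hiR).le 2
        have h2 : B ≤ B / R ^ 2 * (h * i) ^ 2 := by
          rw [div_mul_eq_mul_div, le_div_iff₀ (by positivity)]
          gcongr
        have h3 : 0 ≤ η' * (((k + 1 : ℕ) : ℝ) * τ) := by positivity
        have h4 : 0 ≤ B / R ^ 2 * (2 * (((k + 1 : ℕ) : ℝ) * τ)) := by positivity
        have h5 : B ≤ η' * (((k + 1 : ℕ) : ℝ) * τ)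
            + B / R ^ 2 * ((h * i) ^ 2 + 2 * (((k + 1 : ℕ) : ℝ) * τ)) := by
          rw [mul_add (B / R ^ 2)]; linarith
        nlinarith
  have := main m le_rfl i
  rw [hmτ] at this
  refine this.trans ?_
  have p1 : (1 + K * τ) ^ m ≤ exp (K * T) := one_add_pow_le hK hT.le le_rfl hm
  have p2 : (h * i) ^ 2 ≤ ρ ^ 2 := by
    rw [← sq_abs (h * i)]
    exact pow_le_pow_left₀ (abs_nonneg _) hi 2
  calc _ ≤ exp (K * T) * (η' * T + B / R ^ 2 * (ρ ^ 2 + 2 * T)) := by gcongr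
    _ = η / 2 + exp (K * T) * (B / R ^ 2 * (ρ ^ 2 + 2 * T)) := by
      rw [hη']; field_simp
    _ ≤ η := by linarith

/-! ### Approximations on a mesh through two given points -/

/-- The mesh width `ℓ / (n + 1)`, for which both `x₀` and `x₀ + ℓ` are grid points. -/
def mesh (ℓ : ℝ) (n : ℕ) : ℝ := ℓ / (n + 1)

/-- A number of time steps large enough that the time step `T / nsteps` is at most a quarter of the
squared mesh width. -/
def nsteps (T ℓ : ℝ) (n : ℕ) : ℕ := ⌈4 * T / mesh ℓ n ^ 2⌉₊ + 1

/-- The `n`-th approximation at time `T` of the solution of `z_t = z_xx + c z` with initial datum `v`.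
The index `0` corresponds to the point `x₀` and the index `n + 1` to `x₀ + ℓ`. -/
def app (T ℓ x₀ : ℝ) (c : ℝ → ℝ → ℝ) (n : ℕ) (v : ℝ → ℝ) : ℤ → ℝ :=
  evol (T / nsteps T ℓ n / mesh ℓ n ^ 2) (pot c x₀ (mesh ℓ n) (T / nsteps T ℓ n))
    (fun j => v (x₀ + mesh ℓ n * j)) (nsteps T ℓ n)

lemma mesh_pos {ℓ : ℝ} (hℓ : 0 < ℓ) (n : ℕ) : 0 < mesh ℓ n := by unfold mesh; positivity

lemma mesh_tendsto (ℓ : ℝ) : Tendsto (mesh ℓ) atTop (𝓝 0) := by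
  have := (tendsto_one_div_add_atTop_nhds_zero_nat (𝕜 := ℝ)).const_mul ℓ
  rw [mul_zero] at this
  refine this.congr fun n => ?_
  rw [mesh, mul_one_div]

lemma nsteps_pos (T ℓ : ℝ) (n : ℕ) : 0 < nsteps T ℓ n := Nat.succ_pos _

lemma tau_le {T ℓ : ℝ} (hℓ : 0 < ℓ) (n : ℕ) :
    T / nsteps T ℓ n ≤ mesh ℓ n ^ 2 / 4 := by
  have h1 := mesh_pos hℓ n
  have h2 : (0 : ℝ) < nsteps T ℓ n := by exact_mod_cast nsteps_pos T ℓ n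
  have h3 : 4 * T / mesh ℓ n ^ 2 ≤ nsteps T ℓ n := by
    unfold nsteps; push_cast
    linarith [Nat.le_ceil (4 * T / mesh ℓ n ^ 2)]
  rw [div_le_iff₀ (by positivity)] at h3
  rw [div_le_iff₀ h2]
  linarith

lemma lam_nonneg {T ℓ : ℝ} (hT : 0 < T) (n : ℕ) : 0 ≤ T / nsteps T ℓ n / mesh ℓ n ^ 2 := by
  positivity

lemma lam_le {T ℓ : ℝ} (hℓ : 0 < ℓ) (n : ℕ) :
    T / nsteps T ℓ n / mesh ℓ n ^ 2 ≤ 1 / 4 := by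
  have h1 := mesh_pos hℓ n
  rw [div_le_iff₀ (by positivity)]
  linarith [tau_le (T := T) hℓ n]

lemma pot_zero (x₀ h τ : ℝ) : pot (fun _ _ => 0) x₀ h τ = fun _ _ => 0 := by
  funext k i; simp [pot]

lemma pot_nonneg {c : ℝ → ℝ → ℝ} (hc : ∀ x t, 0 ≤ c x t) (x₀ h : ℝ) {τ : ℝ} (hτ : 0 ≤ τ)
    (k : ℕ) (i : ℤ) : 0 ≤ pot c x₀ h τ k i := mul_nonneg hτ (hc _ _)

/-- The approximations converge at the two points `x₀` and `x₀ + ℓ`. -/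
lemma LinSol.tendsto_app {K M T : ℝ} {z c : ℝ → ℝ → ℝ} (hz : LinSol K M T z c) (hT : 0 < T)
    {ℓ : ℝ} (hℓ : 0 < ℓ) (x₀ : ℝ) :
    Tendsto (fun n => app T ℓ x₀ c n (fun x => z x 0) 0) atTop (𝓝 (z x₀ T)) ∧
    Tendsto (fun n : ℕ => app T ℓ x₀ c n (fun x => z x 0) (n + 1)) atTop
      (𝓝 (z (x₀ + ℓ) T)) := by
  have key : ∀ η > 0, ∀ᶠ n : ℕ in atTop, ∀ i : ℤ, |mesh ℓ n * i| ≤ ℓ →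
      |app T ℓ x₀ c n (fun x => z x 0) i - z (x₀ + mesh ℓ n * i) T| ≤ η := by
    intro η hη
    obtain ⟨h₀, hh₀, H⟩ := hz.converges hT x₀ ℓ hη
    filter_upwards [(mesh_tendsto ℓ).eventually (gt_mem_nhds hh₀)] with n hn i hi
    exact H _ (mesh_pos hℓ n) hn _ (nsteps_pos T ℓ n) (tau_le hℓ n) i hi
  constructor
  · rw [Metric.tendsto_nhds]
    intro ε hε
    filter_upwards [key (ε / 2) (half_pos hε)] with n hn
    have := hn 0 (by simpa using hℓ.le)
    simp only [Int.cast_zero, mul_zero, add_zero] at this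
    rw [Real.dist_eq]
    linarith
  · rw [Metric.tendsto_nhds]
    intro ε hε
    filter_upwards [key (ε / 2) (half_pos hε)] with n hn
    have e : mesh ℓ n * ((n + 1 : ℤ) : ℝ) = ℓ := by
      unfold mesh; push_cast; field_simp
    have := hn (n + 1) (by rw [e, abs_of_pos hℓ])
    rw [e] at this
    rw [Real.dist_eq]
    linarith

/-- Approximations with potential are dominated by those of the heat equation, uniformly in the mesh. -/
lemma abs_app_le {K T ℓ x₀ : ℝ} {c : ℝ → ℝ → ℝ} (hT : 0 < T) (hℓ : 0 < ℓ)
    (hc : ∀ x t, 0 ≤ c x t) (hcK : ∀ x t, c x t ≤ K) (n : ℕ) {v w : ℝ → ℝ}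
    (hvw : ∀ x, |v x| ≤ w x) (i : ℤ) :
    |app T ℓ x₀ c n v i| ≤ exp (2 * K * T) * app T ℓ x₀ (fun _ _ => 0) n w i := by
  have hK : 0 ≤ K := (hc 0 0).trans (hcK 0 0)
  have hτ : 0 ≤ T / nsteps T ℓ n := by positivity
  have h := abs_evol_le (lam_nonneg (ℓ := ℓ) hT n) (lam_le hℓ n) (q := K * (T / nsteps T ℓ n))
    (pot_nonneg hc x₀ (mesh ℓ n) hτ) (fun k i => by
      rw [mul_comm K]; exact mul_le_mul_of_nonneg_left (hcK _ _) hτ)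
    (v := fun j => v (x₀ + mesh ℓ n * j)) (w := fun j => w (x₀ + mesh ℓ n * j))
    (fun i => hvw _) (nsteps T ℓ n) i
  have h2 := one_add_pow_le (K := 2 * K) (by positivity) hT.le le_rfl (nsteps_pos T ℓ n)
  rw [mul_assoc 2 K (T / _)] at h2
  unfold app
  rw [pot_zero]
  refine h.trans (mul_le_mul_of_nonneg_right h2 ?_)
  exact evol_nonneg (lam_nonneg hT n) (lam_le hℓ n) (fun _ _ => le_rfl)
    (fun i => (abs_nonneg _).trans (hvw _)) _ _

lemma abs_app_le_const {K T ℓ x₀ M : ℝ} {c : ℝ → ℝ → ℝ} (hT : 0 < T) (hℓ : 0 < ℓ)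
    (hc : ∀ x t, 0 ≤ c x t) (hcK : ∀ x t, c x t ≤ K) (n : ℕ) {v : ℝ → ℝ}
    (hv : ∀ x, |v x| ≤ M) (i : ℤ) : |app T ℓ x₀ c n v i| ≤ exp (2 * K * T) * M := by
  have := abs_app_le (x₀ := x₀) hT hℓ hc hcK n hv i
  unfold app at this ⊢
  rwa [pot_zero, evol_const] at this

/-! ### Gaussians -/

/-- The heat kernel `(σ + t) ^ (-1/2) * exp (-(x - p)² / (4 (σ + t)))`, without the factor `(4π)^(-1/2)`,
started at time `σ`. Writing the power inside the exponential turns comparisons into inequalities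
between exponents. -/
def gauss (σ p x t : ℝ) : ℝ := exp (-(x - p) ^ 2 / (4 * (σ + t)) - log (σ + t) / 2)

lemma gauss_deriv_x (σ p x t : ℝ) :
    HasDerivAt (fun y => gauss σ p y t) (-(x - p) / (2 * (σ + t)) * gauss σ p x t) x := by
  have h : HasDerivAt (fun y => -(y - p) ^ 2 / (4 * (σ + t)) - log (σ + t) / 2)
      (-(2 * (x - p) ^ (2 - 1) * 1) / (4 * (σ + t))) x :=
    ((((hasDerivAt_id x).sub_const p).pow 2).neg.div_const _).sub_const _
  refine h.exp.congr_deriv ?_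
  change gauss σ p x t * _ = _
  rw [mul_comm, show 4 * (σ + t) = 2 * (2 * (σ + t)) by ring,
    show -(2 * (x - p) ^ (2 - 1) * 1) = 2 * -(x - p) by ring,
    mul_div_mul_left _ _ two_ne_zero]

lemma gauss_linSol {σ : ℝ} (hσ : 0 < σ) (p T : ℝ) :
    LinSol 0 (exp (-log σ / 2)) T (gauss σ p) (fun _ _ => 0) := by
  refine ⟨fun x t ht => ?_, fun _ _ => le_rfl, fun _ _ => le_rfl,
    fun x t => gauss σ p x t * ((x - p) ^ 2 / (4 * (σ + t) ^ 2) - 1 / (2 * (σ + t))),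
    fun x t => -(x - p) / (2 * (σ + t)) * gauss σ p x t,
    fun x t => gauss σ p x t * ((x - p) ^ 2 / (4 * (σ + t) ^ 2) - 1 / (2 * (σ + t))),
    fun x t ht => ?_, fun x t _ => gauss_deriv_x σ p x t, fun x t ht => ?_, ?_, ?_, fun x t _ => ?_⟩
  · have h1 : 0 < σ + t := by linarith [ht.1]
    rw [gauss, abs_of_pos (exp_pos _), exp_le_exp]
    have h2 : 0 ≤ (x - p) ^ 2 / (4 * (σ + t)) := by positivity
    have h3 := log_le_log hσ (show σ ≤ σ + t by linarith [ht.1])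
    rw [neg_div]
    linarith
  · have h1 : 0 < σ + t := by linarith [ht.1]
    have hs : HasDerivAt (fun s => σ + s) 1 t := (hasDerivAt_id t).const_add σ
    have h2 : HasDerivAt (fun s => -(x - p) ^ 2 / (4 * (σ + s)) - log (σ + s) / 2)
        ((0 * (4 * (σ + t)) - -(x - p) ^ 2 * (4 * 1)) / (4 * (σ + t)) ^ 2
          - 1 / (σ + t) / 2) t :=
      ((hasDerivAt_const t _).div (hs.const_mul 4) (by positivity)).sub
        ((hs.log h1.ne').div_const 2)
    refine h2.exp.congr_deriv ?_
    change gauss σ p x t * _ = _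
    congr 1
    field_simp
    ring
  · have h1 : 0 < σ + t := by linarith [ht.1]
    have h2 : HasDerivAt (fun y => -(y - p) / (2 * (σ + t))) (-1 / (2 * (σ + t))) x :=
      (((hasDerivAt_id x).sub_const p).neg).div_const _
    refine (h2.mul (gauss_deriv_x σ p x t)).congr_deriv ?_
    beta_reduce
    generalize gauss σ p x t = E
    field_simp
    ring
  all_goals first
    | (have hne : ∀ q ∈ (univ : Set ℝ) ×ˢ Icc 0 T, σ + q.2 ≠ 0 := fun q hq => by
        have := hq.2.1
        positivity
       unfold gauss
       have a1 : ContinuousOn (fun q : ℝ × ℝ => σ + q.2) (univ ×ˢ Icc 0 T) := by fun_prop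
       have a2 : ContinuousOn (fun q : ℝ × ℝ => q.1 - p) (univ ×ˢ Icc 0 T) := by fun_prop
       exact (((((a2.pow 2).neg.div (continuousOn_const.mul a1) (fun q hq =>
           mul_ne_zero four_ne_zero (hne q hq))).sub ((a1.log hne).div_const 2))).rexp).mul
         (((a2.pow 2).div (continuousOn_const.mul (a1.pow 2)) (fun q hq =>
           mul_ne_zero four_ne_zero (pow_ne_zero 2 (hne q hq)))).sub
         (continuousOn_const.div (continuousOn_const.mul a1) (fun q hq =>
           mul_ne_zero two_ne_zero (hne q hq)))))
    | simp

/-- The scale `σ = 1 / N` of the narrow Gaussians is chosen through this inequality. -/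
lemma exists_scale {ρ : ℝ} (hρ : 0 < ρ) (C : ℝ) :
    ∃ N : ℕ, 1 ≤ N ∧ C < ρ ^ 2 / 4 * N - 2 * log N := by
  obtain ⟨k, hk⟩ := exists_nat_gt (max (max C 1) (20 / ρ ^ 2))
  have h1 : C < k := (le_max_left _ _).trans_lt ((le_max_left _ _).trans_lt hk)
  have h2 : (1 : ℝ) < k := (le_max_right _ _).trans_lt ((le_max_left _ _).trans_lt hk)
  have h3 : 20 / ρ ^ 2 < k := (le_max_right _ _).trans_lt hk
  have h4 : 1 < k := by exact_mod_cast h2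
  refine ⟨k ^ 2, Nat.one_le_pow _ _ (by lia), ?_⟩
  rw [div_lt_iff₀ (by positivity)] at h3
  push_cast
  rw [log_pow]
  have h5 : log k ≤ k := (log_le_sub_one_of_pos (by linarith)).trans (by linarith)
  push_cast
  nlinarith

/-! ### Strict positivity and uniqueness -/

lemma app_sub (T ℓ x₀ : ℝ) (c : ℝ → ℝ → ℝ) (n : ℕ) (v w : ℝ → ℝ) (i : ℤ) :
    app T ℓ x₀ c n (fun x => v x - w x) i = app T ℓ x₀ c n v i - app T ℓ x₀ c n w i :=
  evol_sub _ _ _ _ _ _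

lemma app_add (T ℓ x₀ : ℝ) (c : ℝ → ℝ → ℝ) (n : ℕ) (v w : ℝ → ℝ) (i : ℤ) :
    app T ℓ x₀ c n (fun x => v x + w x) i = app T ℓ x₀ c n v i + app T ℓ x₀ c n w i :=
  evol_add _ _ _ _ _ _

lemma app_smul (T ℓ x₀ : ℝ) (c : ℝ → ℝ → ℝ) (n : ℕ) (r : ℝ) (v : ℝ → ℝ) (i : ℤ) :
    app T ℓ x₀ c n (fun x => r * v x) i = r * app T ℓ x₀ c n v i :=
  evol_smul _ _ _ _ _ _

lemma app_const (T ℓ x₀ : ℝ) (n : ℕ) (r : ℝ) (i : ℤ) :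
    app T ℓ x₀ (fun _ _ => 0) n (fun _ => r) i = r := by
  unfold app; rw [pot_zero]; exact evol_const _ _ _ _

lemma app_sq (T x₀ y : ℝ) {ℓ : ℝ} (hℓ : 0 < ℓ) (n : ℕ) (i : ℤ) :
    app T ℓ x₀ (fun _ _ => 0) n (fun x => (x - y) ^ 2) i
      = (x₀ + mesh ℓ n * i - y) ^ 2 + 2 * T := by
  have h1 := mesh_pos hℓ n
  have h2 : (0 : ℝ) < nsteps T ℓ n := by exact_mod_cast nsteps_pos T ℓ n
  have := evol_sq (T / nsteps T ℓ n / mesh ℓ n ^ 2) (mesh ℓ n) (x₀ - y) (nsteps T ℓ n) i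
  unfold app
  rw [pot_zero]
  have e : (fun j : ℤ => (x₀ + mesh ℓ n * j - y) ^ 2) = fun j : ℤ => (x₀ - y + mesh ℓ n * j) ^ 2 := by
    funext j; ring
  rw [e, this]
  field_simp
  ring

lemma app_nonneg {T ℓ : ℝ} (x₀ : ℝ) {c : ℝ → ℝ → ℝ} (hT : 0 < T) (hℓ : 0 < ℓ)
    (hc : ∀ x t, 0 ≤ c x t) (n : ℕ) {v : ℝ → ℝ} (hv : ∀ x, 0 ≤ v x) (i : ℤ) :
    0 ≤ app T ℓ x₀ c n v i :=
  evol_nonneg (lam_nonneg hT n) (lam_le hℓ n) (pot_nonneg hc _ _ (by positivity))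
    (fun _ => hv _) _ _

lemma LinSol.continuousAt_zero {K M T : ℝ} {z c : ℝ → ℝ → ℝ} (hz : LinSol K M T z c)
    (hT : 0 < T) (x : ℝ) : ContinuousAt (fun y => z y 0) x := by
  obtain ⟨_, _, _, _, hx, _⟩ := hz.sol
  exact (hx x 0 ⟨le_rfl, hT.le⟩).continuousAt

lemma exists_pos_nhd {g : ℝ → ℝ} {p : ℝ} (hg : ContinuousAt g p) (hp : 0 < g p) :
    ∃ ρ > 0, ∀ x, |x - p| < ρ → g p / 2 < g x := by
  obtain ⟨ρ, h1, h2⟩ := Metric.eventually_nhds_iff.1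
    (hg.eventually (lt_mem_nhds (half_lt_self hp)))
  exact ⟨ρ, h1, fun x hx => h2 (by rwa [Real.dist_eq])⟩

lemma gauss_pos (σ p x t : ℝ) : 0 < gauss σ p x t := exp_pos _

/-- Uniqueness for bounded solutions. -/
lemma LinSol.eq_zero {K M T : ℝ} {z c : ℝ → ℝ → ℝ} (hz : LinSol K M T z c) (hT : 0 < T)
    (h0 : ∀ x, z x 0 = 0) (x : ℝ) : z x T = 0 := by
  refine tendsto_nhds_unique (hz.tendsto_app hT one_pos x).1 ?_
  refine tendsto_const_nhds.congr fun n => ?_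
  have := abs_app_le_const (x₀ := x) (M := 0) hT one_pos hz.c_nonneg hz.c_le n
    (v := fun x => z x 0) (fun x => by simp [h0]) 0
  rw [mul_zero] at this
  exact (abs_nonpos_iff.1 this).symm

/-- Strong maximum principle: a nonnegative datum, positive somewhere, gives a positive solution.
The datum dominates a multiple of `exp α * gauss (1 / N) - gauss 1`, which is nonpositive away from
`p` at time `0` but positive at `(x₁, T)`. -/
lemma LinSol.strict_pos {K M T : ℝ} {z c : ℝ → ℝ → ℝ} (hz : LinSol K M T z c) (hT : 0 < T)
    (h0 : ∀ x, 0 ≤ z x 0) {p : ℝ} (hp : 0 < z p 0) (x₁ : ℝ) : 0 < z x₁ T := by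
  obtain ⟨ρ, hρ, hρ'⟩ := exists_pos_nhd (hz.continuousAt_zero hT p) hp
  obtain ⟨N, hN, hscale⟩ := exists_scale hρ (ρ ^ 2 / 4 + (x₁ - p) ^ 2 / (4 * T))
  have hN' : (1 : ℝ) ≤ N := by exact_mod_cast hN
  have hlogN : 0 ≤ log N := log_nonneg hN'
  set σ : ℝ := (N : ℝ)⁻¹ with hσ
  have hσ0 : 0 < σ := by positivity
  have hσ1 : σ ≤ 1 := inv_le_one_of_one_le₀ hN'
  have hlogσ : log σ = -log N := log_inv _
  set α : ℝ := ρ ^ 2 / 4 * N - ρ ^ 2 / 4 - 2 * log N with hα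
  set r : ℝ := z p 0 / 2 / (exp α * exp (-log σ / 2)) with hr
  have hr0 : 0 < r := by positivity
  have hdiv : ∀ d : ℝ, d / (4 * σ) = d * N / 4 := fun d => by
    rw [hσ]; field_simp
  have key : ∀ x, r * (exp α * gauss σ p x 0 - gauss 1 p x 0) ≤ z x 0 := by
    intro x
    by_cases hx : |x - p| < ρ
    · refine le_trans ?_ (hρ' x hx).le
      have h1 : gauss σ p x 0 ≤ exp (-log σ / 2) :=
        (le_abs_self _).trans ((gauss_linSol hσ0 p T).bound x 0 ⟨le_rfl, hT.le⟩)
      have h2 := (gauss_pos 1 p x 0).le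
      calc _ ≤ r * (exp α * exp (-log σ / 2)) := by
            gcongr
            have := mul_le_mul_of_nonneg_left h1 (exp_pos α).le
            linarith
        _ = _ := by rw [hr]; field_simp
    · refine le_trans ?_ (h0 x)
      have hd : ρ ^ 2 ≤ (x - p) ^ 2 := by
        rw [← sq_abs (x - p)]; exact pow_le_pow_left₀ hρ.le (not_lt.1 hx) 2
      refine mul_nonpos_of_nonneg_of_nonpos hr0.le (sub_nonpos.2 ?_)
      unfold gauss
      rw [← exp_add, exp_le_exp, add_zero, add_zero, log_one, hlogσ, neg_div, neg_div, hdiv]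
      nlinarith
  have lim1 := (hz.tendsto_app hT one_pos x₁).1
  have lim2 := ((((gauss_linSol hσ0 p T).tendsto_app hT one_pos x₁).1.const_mul (exp α)).sub
    ((gauss_linSol one_pos p T).tendsto_app hT one_pos x₁).1).const_mul r
  have hle := le_of_tendsto_of_tendsto' lim2 lim1 (fun n => by
    rw [← app_smul, ← app_sub, ← app_smul]
    unfold app
    rw [pot_zero]
    exact evol_compare (lam_nonneg hT n) (lam_le one_pos n)
      (pot_nonneg hz.c_nonneg _ _ (by positivity)) (fun _ => h0 _) (fun _ => key _) _ _)
  refine lt_of_lt_of_le (mul_pos hr0 (sub_pos.2 ?_)) hle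
  unfold gauss
  rw [← exp_add, exp_lt_exp]
  have h1 : log (σ + T) ≤ log (1 + T) := log_le_log (by positivity) (by linarith)
  have h2 : (x₁ - p) ^ 2 / (4 * (σ + T)) ≤ (x₁ - p) ^ 2 / (4 * T) := by
    gcongr; linarith
  have h3 : 0 ≤ (x₁ - p) ^ 2 / (4 * (1 + T)) := by positivity
  rw [neg_div, neg_div]
  linarith

/-! ### Strict negativity of the slope at a zero -/

/-- The two-point determinant of the Gaussians centred at `p` and `q`. -/
def gaussWedge (σ p q x y t : ℝ) : ℝ :=
  gauss σ p x t * gauss σ q y t - gauss σ p y t * gauss σ q x t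

lemma gauss_mul (σ p q x y t : ℝ) : gauss σ p x t * gauss σ q y t
    = exp (-((x - p) ^ 2 + (y - q) ^ 2) / (4 * (σ + t)) - log (σ + t)) := by
  unfold gauss
  rw [← exp_add]
  congr 1
  ring

/-- Factorisation of the Gaussian wedge at time `0`, with `σ = 1 / N`. -/
lemma gaussWedge_zero {N : ℕ} (hN : 1 ≤ N) (p q x y : ℝ) :
    gaussWedge (N : ℝ)⁻¹ p q x y 0 = exp (-((x - p) ^ 2 + (y - q) ^ 2) * N / 4 + log N) *
      (1 - exp (-((y - x) * (q - p)) / 2) ^ N) := by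
  have hN' : (0 : ℝ) < N := by exact_mod_cast hN
  unfold gaussWedge
  rw [gauss_mul, gauss_mul, ← exp_nat_mul, mul_sub, mul_one, ← exp_add, add_zero, log_inv]
  congr 2
  · field_simp
    ring
  · field_simp
    ring

lemma gaussWedge_one_nonneg {p q x y : ℝ} (hpq : p < q) (hxy : x < y) :
    0 ≤ gaussWedge 1 p q x y 0 := by
  have := gaussWedge_zero le_rfl p q x y
  rw [Nat.cast_one, inv_one] at this
  rw [this, pow_one]
  refine mul_nonneg (exp_pos _).le (sub_nonneg.2 (exp_le_one_iff.2 ?_))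
  nlinarith [mul_pos (sub_pos.2 hpq) (sub_pos.2 hxy)]

/-- At distance at least `ρ` from `(p, q)` the narrow Gaussian wedge, even multiplied by a large
constant, is dominated by the wide one, uniformly up to the diagonal `x = y`. -/
lemma gaussWedge_compare {N : ℕ} (hN : 1 ≤ N) {p q x y ρ : ℝ} (hpq : p < q) (hxy : x < y)
    (hρ : ρ ^ 2 ≤ (x - p) ^ 2 + (y - q) ^ 2) :
    exp (ρ ^ 2 / 4 * N - ρ ^ 2 / 4 - 2 * log N) * gaussWedge (N : ℝ)⁻¹ p q x y 0
      ≤ gaussWedge 1 p q x y 0 := by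
  have hN' : (1 : ℝ) ≤ N := by exact_mod_cast hN
  have h1 := gaussWedge_zero le_rfl p q x y
  rw [Nat.cast_one, inv_one, pow_one, log_one, mul_one, add_zero] at h1
  rw [h1, gaussWedge_zero hN]
  set Y := exp (-((y - x) * (q - p)) / 2) with hY
  set D := (x - p) ^ 2 + (y - q) ^ 2 with hD
  have hY1 : Y ≤ 1 := exp_le_one_iff.2 (by
    nlinarith [mul_pos (sub_pos.2 hpq) (sub_pos.2 hxy)])
  have hY0 : 0 < Y := exp_pos _
  -- by Bernoulli the narrow wedge loses at most a factor `N` near the diagonal `x = y`, where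
  -- both wedges vanish to first order
  have hB : 1 - Y ^ N ≤ N * (1 - Y) := by
    have := one_add_mul_le_pow (a := Y - 1) (by linarith) N
    rw [add_sub_cancel] at this
    linarith
  calc _ ≤ exp (ρ ^ 2 / 4 * N - ρ ^ 2 / 4 - 2 * log N) *
        (exp (-D * N / 4 + log N) * (N * (1 - Y))) := by gcongr
    _ = exp (ρ ^ 2 / 4 * N - ρ ^ 2 / 4 - 2 * log N + (-D * N / 4 + log N) + log N) * (1 - Y) := by
      simp only [exp_add, exp_log (show (0 : ℝ) < N by linarith)]; ring
    _ ≤ _ := by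
      refine mul_le_mul_of_nonneg_right (exp_le_exp.2 ?_) (sub_nonneg.2 hY1)
      nlinarith

lemma gaussWedge_hasDerivAt (σ p q x₁ t : ℝ) :
    HasDerivAt (fun x => gaussWedge σ p q x x₁ t)
      (-((q - p) / (2 * (σ + t)) * (gauss σ p x₁ t * gauss σ q x₁ t))) x₁ := by
  refine (((gauss_deriv_x σ p x₁ t).mul_const _).sub
    ((gauss_deriv_x σ q x₁ t).const_mul _)).congr_deriv ?_
  ring

lemma eventually_left_lt {F : ℝ → ℝ} {d x₁ : ℝ} (h : HasDerivAt F d x₁) (hd : 0 < d) :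
    ∀ᶠ x in 𝓝[<] x₁, F x < F x₁ := by
  have h1 := (hasDerivAt_iff_tendsto_slope.1 h).mono_left
    (nhdsWithin_mono x₁ (fun y (hy : y < x₁) => ne_of_lt hy))
  filter_upwards [h1.eventually (lt_mem_nhds hd), self_mem_nhdsWithin] with x hx hlt
  rw [slope_def_field] at hx
  by_contra hge
  have : (F x - F x₁) / (x - x₁) ≤ 0 :=
    div_nonpos_of_nonneg_of_nonpos (by linarith) (by linarith [mem_Iio.1 hlt])
  linarith

/-- If `g` never passes from negative to positive, its positive and negative parts have a nonnegative
wedge. -/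
lemma wedge_parts_nonneg {g : ℝ → ℝ} (hS : ∀ x y, x < y → ¬(g x < 0 ∧ 0 < g y)) {x y : ℝ}
    (hxy : x < y) : 0 ≤ max (g x) 0 * max (-g y) 0 - max (g y) 0 * max (-g x) 0 := by
  have h1 : 0 ≤ max (g x) 0 * max (-g y) 0 := by positivity
  have h2 : max (g y) 0 * max (-g x) 0 = 0 := by
    by_cases hx : g x < 0
    · rw [max_eq_right (not_lt.1 fun hy => hS x y hxy ⟨hx, hy⟩), zero_mul]
    · rw [max_eq_right (a := -g x) (by linarith), mul_zero]
  linarith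

lemma max_sub_max_neg (a : ℝ) : max a 0 - max (-a) 0 = a := by
  rcases le_total a 0 with h | h
  · rw [max_eq_right h, max_eq_left (by linarith)]; ring
  · rw [max_eq_left h, max_eq_right (by linarith)]; ring

/-- Limit of the discrete wedge comparison. With `P`, `N` the evolutions of the positive and negative
parts of the datum, the wedge at `(x, x₁)` is `P x₁ * z x - P x * z x₁`, which at a zero `x₁` of
`z (·, T)` is bounded by a constant times `max (z x T) 0`. -/
lemma LinSol.wedge_limit {K M T : ℝ} {z c : ℝ → ℝ → ℝ} (hz : LinSol K M T z c) (hT : 0 < T)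
    (hS : ∀ x y, x < y → ¬(z x 0 < 0 ∧ 0 < z y 0)) {p q σ A r : ℝ} (hσ0 : 0 < σ)
    (key : ∀ x y, x < y → r * (A * gaussWedge σ p q x y 0 - gaussWedge 1 p q x y 0)
      ≤ max (z x 0) 0 * max (-z y 0) 0 - max (z y 0) 0 * max (-z x 0) 0)
    {x x₁ : ℝ} (hx : x < x₁) (hx₁ : z x₁ T = 0) :
    r * (A * gaussWedge σ p q x x₁ T - gaussWedge 1 p q x x₁ T)
      ≤ exp (2 * K * T) * M * max (z x T) 0 := by
  set P₀ : ℝ → ℝ := fun x => max (z x 0) 0 with hP₀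
  set N₀ : ℝ → ℝ := fun x => max (-z x 0) 0 with hN₀
  have hw0 : ∀ x y, x < y → 0 ≤ P₀ x * N₀ y - P₀ y * N₀ x := fun x y hxy =>
    wedge_parts_nonneg (g := fun x => z x 0) hS hxy
  set M' := exp (2 * K * T) * M with hM'
  have hM0 : 0 ≤ M := (abs_nonneg _).trans (hz.bound 0 0 ⟨le_rfl, hT.le⟩)
  have hP₀M : ∀ x, |P₀ x| ≤ M := fun x => by
    have := hz.bound x 0 ⟨le_rfl, hT.le⟩
    rw [abs_of_nonneg (le_max_right _ _)]
    exact max_le ((le_abs_self _).trans this) hM0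
  have hℓ : 0 < x₁ - x := sub_pos.2 hx
  have lz := hz.tendsto_app hT hℓ x
  have l1 := (gauss_linSol hσ0 p T).tendsto_app hT hℓ x
  have l2 := (gauss_linSol hσ0 q T).tendsto_app hT hℓ x
  have l3 := (gauss_linSol one_pos p T).tendsto_app hT hℓ x
  have l4 := (gauss_linSol one_pos q T).tendsto_app hT hℓ x
  have lhs := ((((l1.1.mul l2.2).sub (l1.2.mul l2.1)).const_mul (A)).sub
    ((l3.1.mul l4.2).sub (l3.2.mul l4.1))).const_mul r
  have rhs := ((lz.1.max (tendsto_const_nhds (x := (0 : ℝ)))).add lz.2.abs).const_mul M'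
  have := le_of_tendsto_of_tendsto' lhs rhs (fun n => by
    set k : ℕ := nsteps T (x₁ - x) n
    set h : ℝ := mesh (x₁ - x) n
    have hh : 0 < h := mesh_pos hℓ n
    have mono : ∀ i j : ℤ, i < j → x + h * i < x + h * j := fun i j hij => by
      have : (i : ℝ) < j := by exact_mod_cast hij
      nlinarith
    have W := (wedge_evol_compare (lam_nonneg (ℓ := x₁ - x) hT n) (lam_le hℓ n)
      (pot_nonneg hz.c_nonneg x h (τ := T / k) (by positivity))
      (P := fun j => P₀ (x + h * j)) (N := fun j => N₀ (x + h * j))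
      (p := fun j => gauss σ p (x + h * j) 0) (q := fun j => gauss σ q (x + h * j) 0)
      (p' := fun j => gauss 1 p (x + h * j) 0) (q' := fun j => gauss 1 q (x + h * j) 0)
      (A := A) (r := r)
      (fun i j hij => hw0 _ _ (mono i j hij)) (fun i j hij => key _ _ (mono i j hij)) k
      0 (n + 1) (by lia)).2
    have hPn := fun i => abs_app_le_const (x₀ := x) hT hℓ hz.c_nonneg hz.c_le n hP₀M i
    have hPn0 := fun i => app_nonneg x hT hℓ hz.c_nonneg n
      (v := P₀) (fun x => le_max_right _ _) i
    have hsub := fun i => app_sub T (x₁ - x) x c n P₀ N₀ i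
    have e : (fun x => P₀ x - N₀ x) = fun x => z x 0 := by
      funext y; exact max_sub_max_neg _
    rw [e] at hsub
    have W' : r * (A * (app T (x₁ - x) x (fun _ _ => 0) n (fun x => gauss σ p x 0) 0
          * app T (x₁ - x) x (fun _ _ => 0) n (fun x => gauss σ q x 0) (n + 1)
          - app T (x₁ - x) x (fun _ _ => 0) n (fun x => gauss σ p x 0) (n + 1)
          * app T (x₁ - x) x (fun _ _ => 0) n (fun x => gauss σ q x 0) 0)
        - (app T (x₁ - x) x (fun _ _ => 0) n (fun x => gauss 1 p x 0) 0
          * app T (x₁ - x) x (fun _ _ => 0) n (fun x => gauss 1 q x 0) (n + 1)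
          - app T (x₁ - x) x (fun _ _ => 0) n (fun x => gauss 1 p x 0) (n + 1)
          * app T (x₁ - x) x (fun _ _ => 0) n (fun x => gauss 1 q x 0) 0))
        ≤ app T (x₁ - x) x c n P₀ 0 * app T (x₁ - x) x c n N₀ (n + 1)
          - app T (x₁ - x) x c n P₀ (n + 1) * app T (x₁ - x) x c n N₀ 0 := by
      unfold app
      rw [pot_zero]
      exact W
    refine W'.trans ?_
    have s0 := hsub 0
    have s1 := hsub (n + 1)
    have u0 := (le_abs_self _).trans (hPn 0)
    have u1 := (le_abs_self _).trans (hPn (n + 1))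
    have v0 := hPn0 0
    have v1 := hPn0 (n + 1)
    generalize app T (x₁ - x) x c n P₀ 0 = A0 at *
    generalize app T (x₁ - x) x c n P₀ (n + 1) = A1 at *
    generalize app T (x₁ - x) x c n (fun x => z x 0) 0 = Z0 at *
    generalize app T (x₁ - x) x c n (fun x => z x 0) (n + 1) = Z1 at *
    have e0 : app T (x₁ - x) x c n N₀ 0 = A0 - Z0 := by linarith
    have e1 : app T (x₁ - x) x c n N₀ (n + 1) = A1 - Z1 := by linarith
    rw [e0, e1]
    have f1 : A1 * Z0 ≤ M' * max Z0 0 :=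
      (mul_le_mul_of_nonneg_left (le_max_left _ _) v1).trans
        (mul_le_mul_of_nonneg_right u1 (le_max_right _ _))
    have f2 : -(A0 * Z1) ≤ M' * |Z1| := by
      calc -(A0 * Z1) = A0 * -Z1 := by ring
        _ ≤ A0 * |Z1| := mul_le_mul_of_nonneg_left (neg_le_abs _) v0
        _ ≤ _ := mul_le_mul_of_nonneg_right u0 (abs_nonneg _)
    linarith)
  rw [add_sub_cancel, hx₁, abs_zero, add_zero] at this
  exact this

/-- If the datum is positive and then negative, with no other sign changes, then at time `T` every
zero has a negative slope: by `LinSol.wedge_limit`, on the left of `x₁` the solution lies above a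
multiple of a combination of Gaussian wedges whose slope at `x₁` is negative. -/
lemma LinSol.strict_slope {K M T : ℝ} {z c : ℝ → ℝ → ℝ} (hz : LinSol K M T z c) (hT : 0 < T)
    (hS : ∀ x y, x < y → ¬(z x 0 < 0 ∧ 0 < z y 0)) {p q : ℝ} (hpq : p < q)
    (hp : 0 < z p 0) (hq : z q 0 < 0) {x₁ d : ℝ} (hx₁ : z x₁ T = 0)
    (hd : HasDerivAt (fun x => z x T) d x₁) : d < 0 := by
  obtain ⟨ρ₁, hρ₁, hρ₁'⟩ := exists_pos_nhd (hz.continuousAt_zero hT p) hp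
  obtain ⟨ρ₂, hρ₂, hρ₂'⟩ := exists_pos_nhd (hz.continuousAt_zero hT q).neg (neg_pos.2 hq)
  set ρ := min ρ₁ ρ₂ with hρdef
  have hρ : 0 < ρ := lt_min hρ₁ hρ₂
  obtain ⟨N, hN, hscale⟩ := exists_scale hρ
    (ρ ^ 2 / 4 + ((x₁ - p) ^ 2 + (x₁ - q) ^ 2) / (4 * T))
  have hN' : (1 : ℝ) ≤ N := by exact_mod_cast hN
  have hcmp := fun x y (hxy : x < y) => gaussWedge_compare (ρ := ρ) hN hpq hxy
  set σ : ℝ := (N : ℝ)⁻¹ with hσ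
  have hσ0 : 0 < σ := by positivity
  have hσ1 : σ ≤ 1 := inv_le_one_of_one_le₀ hN'
  set α : ℝ := ρ ^ 2 / 4 * N - ρ ^ 2 / 4 - 2 * log N with hα
  set E : ℝ := exp (-log σ / 2) with hE
  have hE0 : 0 < E := exp_pos _
  set δ : ℝ := z p 0 / 2 * (-z q 0 / 2) with hδ
  have hδ0 : 0 < δ := mul_pos (by linarith) (by linarith)
  set r : ℝ := δ / (exp α * (E * E)) with hr
  have hr0 : 0 < r := by positivity
  set P₀ : ℝ → ℝ := fun x => max (z x 0) 0 with hP₀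
  set N₀ : ℝ → ℝ := fun x => max (-z x 0) 0 with hN₀
  have hw0 : ∀ x y, x < y → 0 ≤ P₀ x * N₀ y - P₀ y * N₀ x := fun x y hxy =>
    wedge_parts_nonneg (g := fun x => z x 0) hS hxy
  have key : ∀ x y, x < y → r * (exp α * gaussWedge σ p q x y 0 - gaussWedge 1 p q x y 0)
      ≤ P₀ x * N₀ y - P₀ y * N₀ x := by
    intro x y hxy
    by_cases hD : ρ ^ 2 ≤ (x - p) ^ 2 + (y - q) ^ 2
    · exact (mul_nonpos_of_nonneg_of_nonpos hr0.le (sub_nonpos.2 (hcmp x y hxy hD))).trans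
        (hw0 x y hxy)
    · rw [not_le] at hD
      have hx : |x - p| < ρ := abs_lt_of_sq_lt_sq (by nlinarith [sq_nonneg (y - q)]) hρ.le
      have hy : |y - q| < ρ := abs_lt_of_sq_lt_sq (by nlinarith [sq_nonneg (x - p)]) hρ.le
      have a1 : z p 0 / 2 < z x 0 := hρ₁' x (hx.trans_le (min_le_left _ _))
      have a2 : -z q 0 / 2 < -z y 0 := hρ₂' y (hy.trans_le (min_le_right _ _))
      have g1 : ∀ p x, gauss σ p x 0 ≤ E := fun p x =>
        (le_abs_self _).trans ((gauss_linSol hσ0 p T).bound x 0 ⟨le_rfl, hT.le⟩)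
      have b1 : gaussWedge σ p q x y 0 ≤ E * E := by
        have := mul_le_mul (g1 p x) (g1 q y) (gauss_pos _ _ _ _).le hE0.le
        have := mul_pos (gauss_pos σ p y 0) (gauss_pos σ q x 0)
        unfold gaussWedge
        linarith
      have b2 := gaussWedge_one_nonneg hpq hxy
      have e : P₀ x * N₀ y - P₀ y * N₀ x = z x 0 * -z y 0 := by
        simp only [hP₀, hN₀]
        rw [max_eq_left (a := z x 0) (by linarith), max_eq_right (a := z y 0) (by linarith),
          max_eq_left (a := -z y 0) (by linarith)]
        ring
      rw [e]
      calc _ ≤ r * (exp α * (E * E)) := by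
            have := mul_le_mul_of_nonneg_left b1 (exp_pos α).le
            gcongr
            linarith
        _ = δ := by rw [hr]; field_simp
        _ ≤ _ := mul_le_mul a1.le a2.le (by linarith) (by linarith)
  set M' := exp (2 * K * T) * M with hM'
  have hM0 : 0 ≤ M := (abs_nonneg _).trans (hz.bound 0 0 ⟨le_rfl, hT.le⟩)
  have hM'0 : 0 ≤ M' := by positivity
  have main : ∀ x < x₁, r * (exp α * gaussWedge σ p q x x₁ T - gaussWedge 1 p q x x₁ T)
      ≤ M' * max (z x T) 0 := fun x hx => hz.wedge_limit hT hS hσ0 key hx hx₁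
  by_contra hd0
  rw [not_lt] at hd0
  set g₁ := gauss σ p x₁ T * gauss σ q x₁ T with hg₁
  set g₂ := gauss 1 p x₁ T * gauss 1 q x₁ T with hg₂
  have hBd := (((gaussWedge_hasDerivAt σ p q x₁ T).const_mul (exp α)).sub
    (gaussWedge_hasDerivAt 1 p q x₁ T)).const_mul r
  have hg : g₂ < exp α * g₁ := by
    rw [hg₁, hg₂, gauss_mul, gauss_mul, ← exp_add, exp_lt_exp]
    have h1 : log (σ + T) ≤ log (1 + T) := log_le_log (by positivity) (by linarith)
    have h2 : ((x₁ - p) ^ 2 + (x₁ - q) ^ 2) / (4 * (σ + T))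
        ≤ ((x₁ - p) ^ 2 + (x₁ - q) ^ 2) / (4 * T) := by
      gcongr; linarith
    have h3 : 0 ≤ ((x₁ - p) ^ 2 + (x₁ - q) ^ 2) / (4 * (1 + T)) := by positivity
    rw [neg_div, neg_div]
    linarith
  have hg₂0 : 0 < g₂ := mul_pos (gauss_pos _ _ _ _) (gauss_pos _ _ _ _)
  have hB' : r * (exp α * -((q - p) / (2 * (σ + T)) * g₁) - -((q - p) / (2 * (1 + T)) * g₂))
      < 0 := by
    refine mul_neg_of_pos_of_neg hr0 ?_
    have h1 : (q - p) / (2 * (1 + T)) ≤ (q - p) / (2 * (σ + T)) := by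
      have := sub_pos.2 hpq
      gcongr
    have h2 : 0 < (q - p) / (2 * (1 + T)) := div_pos (sub_pos.2 hpq) (by positivity)
    nlinarith
  have ev1 := eventually_left_lt ((hd.const_mul M').sub hBd) (by
    have := mul_nonneg hM'0 hd0
    linarith)
  have ev2 := eventually_left_lt hBd.neg (by linarith)
  obtain ⟨x, ⟨h1, h2⟩, hx⟩ := ((ev1.and ev2).and self_mem_nhdsWithin).exists
  have h3 := main x hx
  have d1 : gaussWedge σ p q x₁ x₁ T = 0 := by unfold gaussWedge; ring
  have d2 : gaussWedge 1 p q x₁ x₁ T = 0 := by unfold gaussWedge; ring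
  simp only [Pi.sub_apply, Pi.neg_apply, d1, d2, hx₁, mul_zero, sub_zero, neg_zero] at h1 h2
  rcases le_total (z x T) 0 with h | h
  · rw [max_eq_right h, mul_zero] at h3
    linarith
  · rw [max_eq_left h] at h3
    linarith

/-! ### Differences of solutions of the semilinear equation -/

/-- Lipschitz continuity of `f t` on `[0, B]`, uniformly for `t` in a compact interval. -/
lemma exists_lipschitz {f : ℝ → ℝ → ℝ} (hf : ContDiff ℝ 2 (Function.uncurry f)) (t₀ t₁ B : ℝ) :
    ∃ Λ : ℝ, 0 ≤ Λ ∧ ∀ t ∈ Icc t₀ t₁, ∀ u ∈ Icc 0 B, ∀ v ∈ Icc 0 B,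
      |f t u - f t v| ≤ Λ * |u - v| := by
  have hc : IsCompact (Icc t₀ t₁ ×ˢ Icc 0 B) := isCompact_Icc.prod isCompact_Icc
  obtain ⟨Λ, hΛ⟩ := hc.exists_bound_of_continuousOn
    (hf.continuous_fderiv two_ne_zero).continuousOn
  refine ⟨max Λ 0, le_max_right _ _, fun t ht u hu v hv => ?_⟩
  have := ((convex_Icc t₀ t₁).prod (convex_Icc 0 B)).norm_image_sub_le_of_norm_fderiv_le
    (f := Function.uncurry f) (𝕜 := ℝ) (C := max Λ 0)
    (fun q _ => (hf.differentiable two_ne_zero) q)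
    (fun q hq => (hΛ q hq).trans (le_max_left _ _)) (x := (t, v)) (y := (t, u))
    ⟨ht, hv⟩ ⟨ht, hu⟩
  simpa [Function.uncurry, Prod.norm_def] using this

lemma isSolOn_mono {f u : ℝ → ℝ → ℝ} {I J : Set ℝ} (h : IsSolOn f u I) (hJ : J ⊆ I) :
    IsSolOn f u J := by
  obtain ⟨ut, ux, uxx, h1, h2, h3, h4, h5, h6, h7⟩ := h
  have hs : (univ : Set ℝ) ×ˢ J ⊆ univ ×ˢ I := prod_mono subset_rfl hJ
  exact ⟨ut, ux, uxx, fun x t ht => h1 x t (hJ ht), fun x t ht => h2 x t (hJ ht),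
    fun x t ht => h3 x t (hJ ht), h4.mono hs, h5.mono hs, h6.mono hs, fun x t ht => h7 x t (hJ ht)⟩

lemma isSolOn_shift {f u : ℝ → ℝ → ℝ} {I : Set ℝ} (h : IsSolOn f u I) (y s : ℝ) {J : Set ℝ}
    (hJ : ∀ t ∈ J, t + s ∈ I) (hs : ∀ t v, f (t + s) v = f t v) :
    IsSolOn f (fun x t => u (x + y) (t + s)) J := by
  obtain ⟨ut, ux, uxx, h1, h2, h3, h4, h5, h6, h7⟩ := h
  have hm : MapsTo (fun p : ℝ × ℝ => (p.1 + y, p.2 + s)) (univ ×ˢ J) (univ ×ˢ I) :=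
    fun p hp => ⟨trivial, hJ _ hp.2⟩
  have hc : ContinuousOn (fun p : ℝ × ℝ => (p.1 + y, p.2 + s)) (univ ×ˢ J) := by fun_prop
  refine ⟨fun x t => ut (x + y) (t + s), fun x t => ux (x + y) (t + s),
    fun x t => uxx (x + y) (t + s), fun x t ht => ?_, fun x t ht => ?_, fun x t ht => ?_,
    h4.comp hc hm, h5.comp hc hm, h6.comp hc hm, fun x t ht => ?_⟩
  · exact (h1 (x + y) (t + s) (hJ t ht)).comp_add_const t s
  · exact (h2 (x + y) (t + s) (hJ t ht)).comp_add_const x y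
  · exact (h3 (x + y) (t + s) (hJ t ht)).comp_add_const x y
  · beta_reduce
    rw [h7 _ _ (hJ t ht), hs]

lemma isSolOn_continuousOn {f u : ℝ → ℝ → ℝ} {t₀ t₁ : ℝ} (h : IsSolOn f u (Icc t₀ t₁)) :
    ContinuousOn (fun p : ℝ × ℝ => u p.1 p.2) (univ ×ˢ Icc t₀ t₁) := by
  obtain ⟨ut, ux, uxx, h1, h2, h3, h4, h5, h6, h7⟩ := h
  rintro ⟨x, t⟩ ⟨-, ht⟩
  have hc : IsCompact (Icc (x - 1) (x + 1) ×ˢ Icc t₀ t₁) := isCompact_Icc.prod isCompact_Icc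
  obtain ⟨C, hC⟩ := hc.exists_bound_of_continuousOn
    (h5.mono (prod_mono (subset_univ _) subset_rfl))
  have hcont : ContinuousOn (fun p : ℝ × ℝ => u p.1 p.2) (Icc (x - 1) (x + 1) ×ˢ Icc t₀ t₁) := by
    refine continuousOn_prod_of_continuousOn_lipschitzOnWith _ C.toNNReal
      (fun y _ s hs => (h1 y s hs).continuousAt.continuousWithinAt) (fun s hs => ?_)
    refine (convex_Icc (x - 1) (x + 1)).lipschitzOnWith_of_nnnorm_hasDerivWithin_le
      (f' := fun y => ux y s) (fun y _ => (h2 y s hs).hasDerivWithinAt) (fun y hy => ?_)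
    rw [← NNReal.coe_le_coe, coe_nnnorm]
    exact (hC (y, s) ⟨hy, hs⟩).trans (le_coe_toNNReal _)
  refine (hcont (x, t) ⟨⟨by linarith, by linarith⟩, ht⟩).mono_of_mem_nhdsWithin ?_
  rw [nhdsWithin_prod_eq, nhdsWithin_univ]
  exact prod_mem_prod (Icc_mem_nhds (by linarith) (by linarith)) self_mem_nhdsWithin

/-- The difference of two bounded solutions, multiplied by `exp (Λ t)`, solves a linear equation whose
coefficient is `Λ` plus the difference quotient of `f`, hence lies in `[0, 2 Λ]`. The coefficient is
set to `0` outside the time interval, and the division by zero where the solutions agree is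
harmless. -/
lemma linSol_of_sols {f u W : ℝ → ℝ → ℝ} {t₀ t₁ Λ B : ℝ} (hu : IsSolOn f u (Icc t₀ t₁))
    (hW : IsSolOn f W (Icc t₀ t₁)) (hΛ : 0 ≤ Λ)
    (hub : ∀ x, ∀ t ∈ Icc t₀ t₁, u x t ∈ Icc 0 B) (hWb : ∀ x, ∀ t ∈ Icc t₀ t₁, W x t ∈ Icc 0 B)
    (hL : ∀ t ∈ Icc t₀ t₁, ∀ a ∈ Icc 0 B, ∀ b ∈ Icc 0 B, |f t a - f t b| ≤ Λ * |a - b|) :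
    ∃ c, LinSol (2 * Λ) (exp (Λ * (t₁ - t₀)) * B) (t₁ - t₀)
      (fun x t => exp (Λ * t) * (u x (t₀ + t) - W x (t₀ + t))) c := by
  have cu := isSolOn_continuousOn hu
  have cW := isSolOn_continuousOn hW
  obtain ⟨ut, ux, uxx, h1, h2, h3, h4, h5, h6, h7⟩ := hu
  obtain ⟨vt, vx, vxx, k1, k2, k3, k4, k5, k6, k7⟩ := hW
  have hmem : ∀ t ∈ Icc 0 (t₁ - t₀), t₀ + t ∈ Icc t₀ t₁ := fun t ht =>
    ⟨by linarith [ht.1], by linarith [ht.2]⟩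
  have hm : MapsTo (fun p : ℝ × ℝ => (p.1, t₀ + p.2)) (univ ×ˢ Icc 0 (t₁ - t₀))
    (univ ×ˢ Icc t₀ t₁) := fun p hp => ⟨trivial, hmem _ hp.2⟩
  have hc : ContinuousOn (fun p : ℝ × ℝ => (p.1, t₀ + p.2)) (univ ×ˢ Icc 0 (t₁ - t₀)) := by
    fun_prop
  have hquot : ∀ x, ∀ t ∈ Icc t₀ t₁,
      |(f t (u x t) - f t (W x t)) / (u x t - W x t)| ≤ Λ := fun x t ht => by
    rw [abs_div]
    exact div_le_of_le_mul₀ (abs_nonneg _) hΛ (hL t ht _ (hub x t ht) _ (hWb x t ht))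
  have hexp : ∀ t : ℝ, HasDerivAt (fun t => exp (Λ * t)) (exp (Λ * t) * (Λ * 1)) t := fun t =>
    ((hasDerivAt_id t).const_mul Λ).exp
  have cexp : ContinuousOn (fun p : ℝ × ℝ => exp (Λ * p.2)) (univ ×ˢ Icc 0 (t₁ - t₀)) := by
    fun_prop
  classical
  refine ⟨fun x t => if t ∈ Icc 0 (t₁ - t₀) then Λ + (f (t₀ + t) (u x (t₀ + t))
      - f (t₀ + t) (W x (t₀ + t))) / (u x (t₀ + t) - W x (t₀ + t)) else 0,
    fun x t ht => ?_, fun x t => ?_, fun x t => ?_,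
    fun x t => exp (Λ * t) * (Λ * 1) * (u x (t₀ + t) - W x (t₀ + t))
      + exp (Λ * t) * (ut x (t₀ + t) - vt x (t₀ + t)),
    fun x t => exp (Λ * t) * (ux x (t₀ + t) - vx x (t₀ + t)),
    fun x t => exp (Λ * t) * (uxx x (t₀ + t) - vxx x (t₀ + t)),
    fun x t ht => ?_, fun x t ht => ?_, fun x t ht => ?_, ?_, ?_, fun x t ht => ?_⟩
  · have a := hub x _ (hmem t ht)
    have b := hWb x _ (hmem t ht)
    rw [abs_mul, abs_of_pos (exp_pos _)]
    refine mul_le_mul (exp_le_exp.2 (mul_le_mul_of_nonneg_left ht.2 hΛ)) ?_ (abs_nonneg _)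
      (exp_pos _).le
    rw [abs_le]
    constructor <;> linarith [a.1, a.2, b.1, b.2]
  · split_ifs with ht
    · linarith [(abs_le.1 (hquot x _ (hmem t ht))).1]
    · exact le_rfl
  · split_ifs with ht
    · linarith [(abs_le.1 (hquot x _ (hmem t ht))).2]
    · linarith
  · exact (hexp t).mul (((h1 x _ (hmem t ht)).comp_const_add t₀ t).sub
      ((k1 x _ (hmem t ht)).comp_const_add t₀ t))
  · exact ((h2 x _ (hmem t ht)).sub (k2 x _ (hmem t ht))).const_mul _
  · exact ((h3 x _ (hmem t ht)).sub (k3 x _ (hmem t ht))).const_mul _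
  · exact ((cexp.mul continuousOn_const).mul ((cu.comp hc hm).sub (cW.comp hc hm))).add
      (cexp.mul ((h4.comp hc hm).sub (k4.comp hc hm)))
  · exact cexp.mul ((h6.comp hc hm).sub (k6.comp hc hm))
  · beta_reduce
    rw [if_pos ht, h7 _ _ (hmem t ht), k7 _ _ (hmem t ht)]
    by_cases he : u x (t₀ + t) - W x (t₀ + t) = 0
    · rw [he, sub_eq_zero.1 he]; ring
    · field_simp
      ring

/-! ### The sign pattern of the Heaviside solution -/

/-- The scheme preserves the sign pattern `(+, -)` between `x₀` and `x₀ + ℓ`. -/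
lemma app_sign {T ℓ : ℝ} (x₀ : ℝ) {c : ℝ → ℝ → ℝ} (hT : 0 < T) (hℓ : 0 < ℓ)
    (hc : ∀ x t, 0 ≤ c x t) (n : ℕ) {g : ℝ → ℝ}
    (hS : ∀ x y, x < y → ¬(g x < 0 ∧ 0 < g y)) :
    ¬(app T ℓ x₀ c n g 0 < 0 ∧ 0 < app T ℓ x₀ c n g (n + 1)) := by
  rintro ⟨h0, h1⟩
  have hh : 0 < mesh ℓ n := mesh_pos hℓ n
  have W := (wedge_evol_compare (lam_nonneg (ℓ := ℓ) hT n) (lam_le hℓ n)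
    (pot_nonneg hc x₀ (mesh ℓ n) (τ := T / nsteps T ℓ n) (by positivity))
    (P := fun j => max (g (x₀ + mesh ℓ n * j)) 0) (N := fun j => max (-g (x₀ + mesh ℓ n * j)) 0)
    (p := fun _ => 0) (q := fun _ => 0) (p' := fun _ => 0) (q' := fun _ => 0) (A := 0) (r := 0)
    (fun i j hij => wedge_parts_nonneg hS (by
      have : (i : ℝ) < j := by exact_mod_cast hij
      nlinarith))
    (fun i j hij => by
      rw [zero_mul]
      exact wedge_parts_nonneg hS (by
        have : (i : ℝ) < j := by exact_mod_cast hij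
        nlinarith)) (nsteps T ℓ n) 0 (n + 1) (by lia)).1
  have W' : 0 ≤ app T ℓ x₀ c n (fun x => max (g x) 0) 0
      * app T ℓ x₀ c n (fun x => max (-g x) 0) (n + 1)
      - app T ℓ x₀ c n (fun x => max (g x) 0) (n + 1)
      * app T ℓ x₀ c n (fun x => max (-g x) 0) 0 := W
  have hsub := fun i => app_sub T ℓ x₀ c n (fun x => max (g x) 0) (fun x => max (-g x) 0) i
  simp only [max_sub_max_neg] at hsub
  rw [hsub] at h0 h1
  have a0 := app_nonneg x₀ hT hℓ hc n (v := fun x => max (g x) 0) (fun x => le_max_right _ _) 0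
  have b1 := app_nonneg x₀ hT hℓ hc n (v := fun x => max (-g x) 0) (fun x => le_max_right _ _)
    (n + 1)
  nlinarith

/-- Approximate preservation of the sign pattern: if the datum differs from one with the pattern
`(+, -)` by at most a constant, a quadratic and a Gaussian term, then the pattern holds at time `T`
up to the evolution of these terms under the heat equation, multiplied by `exp (2 K T)`. -/
lemma LinSol.almost_sign {K M T : ℝ} {z c : ℝ → ℝ → ℝ} (hz : LinSol K M T z c) (hT : 0 < T)
    {a η C D ς : ℝ} (hς : 0 < ς) {g : ℝ → ℝ} (hS : ∀ x y, x < y → ¬(g x < 0 ∧ 0 < g y))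
    (hg : ∀ x, |z x 0 - g x| ≤ η + C * (x - a) ^ 2 + D * gauss ς a x 0) {x y : ℝ} (hxy : x < y) :
    ¬(z x T + exp (2 * K * T) * (η + C * ((x - a) ^ 2 + 2 * T) + D * gauss ς a x T) < 0 ∧
      0 < z y T - exp (2 * K * T) * (η + C * ((y - a) ^ 2 + 2 * T) + D * gauss ς a y T)) := by
  rintro ⟨hx, hy⟩
  have hℓ : 0 < y - x := sub_pos.2 hxy
  have lz := hz.tendsto_app hT hℓ x
  have lg := (gauss_linSol hς a T).tendsto_app hT hℓ x
  have e : x + (y - x) = y := by ring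
  rw [e] at lz lg
  have happ : ∀ (n : ℕ) (i : ℤ), |app T (y - x) x c n (fun x => z x 0) i
      - app T (y - x) x c n g i| ≤ exp (2 * K * T) * (η + C * ((x + mesh (y - x) n * i - a) ^ 2
        + 2 * T) + D * app T (y - x) x (fun _ _ => 0) n (fun x => gauss ς a x 0) i) := by
    intro n i
    rw [← app_sub]
    refine (abs_app_le hT hℓ hz.c_nonneg hz.c_le n hg i).trans_eq ?_
    rw [app_add, app_add, app_smul, app_smul, app_const, app_sq _ _ _ hℓ]
  have l0 := lz.1.add (((lg.1.const_mul D).const_add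
    (η + C * ((x - a) ^ 2 + 2 * T))).const_mul (exp (2 * K * T)))
  have l1 := lz.2.sub (((lg.2.const_mul D).const_add
    (η + C * ((y - a) ^ 2 + 2 * T))).const_mul (exp (2 * K * T)))
  obtain ⟨n, h0, h1⟩ := ((l0.eventually (gt_mem_nhds hx)).and
    (l1.eventually (lt_mem_nhds hy))).exists
  refine app_sign x hT hℓ hz.c_nonneg n hS ⟨?_, ?_⟩
  · have := (abs_le.1 (happ n 0)).1
    simp only [Int.cast_zero, mul_zero, add_zero] at this
    linarith
  · have := (abs_le.1 (happ n (n + 1))).2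
    have e : x + mesh (y - x) n * ((n + 1 : ℤ) : ℝ) = y := by
      unfold mesh; push_cast; field_simp; ring
    rw [e] at this
    linarith

/-- A Gaussian of width `ρ` and mass of order `ρ` dominates `1` on the interval of radius `ρ`. -/
lemma half_inv_le_gauss {ρ a x : ℝ} (hρ : 0 < ρ) (hx : |x - a| ≤ ρ) :
    1 ≤ 2 * ρ * gauss (ρ ^ 2) a x 0 := by
  have h1 : (x - a) ^ 2 / (4 * ρ ^ 2) ≤ 1 / 4 := by
    rw [div_le_iff₀ (by positivity), ← sq_abs (x - a)]
    nlinarith [pow_le_pow_left₀ (abs_nonneg _) hx 2]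
  have h2 : exp (-(1 / 4) - log ρ) ≤ gauss (ρ ^ 2) a x 0 := by
    unfold gauss
    rw [exp_le_exp, add_zero, log_pow, neg_div]
    push_cast
    linarith
  rw [exp_sub, exp_log hρ] at h2
  have h3 : 1 / 2 ≤ exp (-(1 / 4) : ℝ) := by
    have := add_one_le_exp (-(1 / 4) : ℝ)
    linarith
  calc (1 : ℝ) = 2 * ρ * (1 / 2 / ρ) := by field_simp
    _ ≤ 2 * ρ * (exp (-(1 / 4)) / ρ) := by gcongr
    _ ≤ _ := by gcongr

/-- At every positive time, the Heaviside solution minus an admissible entire solution does not pass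
from negative to positive. Near `t = 0` the difference has this pattern up to a small constant, a
quadratic term far away and a narrow Gaussian at `a`; `LinSol.almost_sign` carries it to time `s` with an
error smaller than the assumed violation. -/
lemma heaviside_sign {f : ℝ → ℝ → ℝ} {α a : ℝ} {ω : ℝ → ℝ} {u W : ℝ → ℝ → ℝ}
    (hf : ContDiff ℝ 2 (Function.uncurry f)) (hωc : Continuous ω) (hω0 : ω 0 = α) (hα : 0 < α)
    (hu : IsHeavisideSol f α a ω u) (hW : IsSolOn f W univ)
    (hWb : ∀ x t, 0 ≤ W x t ∧ W x t ≤ ω t) {s : ℝ} (hs : 0 < s) {x y : ℝ} (hxy : x < y) :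
    ¬(u x s - W x s < 0 ∧ 0 < u y s - W y s) := by
  rintro ⟨hx, hy⟩
  obtain ⟨husol, hub, hu0⟩ := hu
  obtain ⟨B, hB⟩ := (isCompact_Icc (a := 0) (b := s)).exists_bound_of_continuousOn
    hωc.continuousOn
  have hB' : ∀ t ∈ Icc 0 s, ω t ≤ B := fun t ht => (le_abs_self _).trans (hB t ht)
  have hB0 : 0 < B := hα.trans_le (hω0 ▸ hB' 0 ⟨le_rfl, hs.le⟩)
  obtain ⟨Λ, hΛ, hL⟩ := exists_lipschitz hf 0 s B
  set m := min (-(u x s - W x s)) (u y s - W y s) with hm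
  have hm0 : 0 < m := lt_min (by linarith) hy
  set Q := exp (2 * (2 * Λ) * s) with hQ
  have hQ0 : 0 < Q := exp_pos _
  set X := max ((x - a) ^ 2) ((y - a) ^ 2) + 2 * s with hX
  have hX0 : 0 < X := by positivity
  set G := exp (-log (s / 2) / 2) with hG
  have hG0 : 0 < G := exp_pos _
  set η := m / (4 * Q) with hη
  set C := m / (4 * Q * X) with hC
  set ρ := m / (4 * Q * (2 * B * G)) with hρ
  have hη0 : 0 < η := by positivity
  have hC0 : 0 < C := by positivity
  have hρ0 : 0 < ρ := by positivity
  set R := √(B / C) with hR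
  -- at a small time `ε` the datum is attained up to `η / 2` for `ρ ≤ |x - a| ≤ R`, and
  -- `ω ε < α + η / 2`; beyond `R` the quadratic term alone exceeds the bound `B`
  obtain ⟨δ₁, hδ₁, H1⟩ := hu0 (Icc (a - R) (a - ρ) ∪ Icc (a + ρ) (a + R))
    (isCompact_Icc.union isCompact_Icc) (by
      rintro (h | h)
      · linarith [h.2]
      · linarith [h.1]) (η / 2) (half_pos hη0)
  obtain ⟨δ₂, hδ₂, H2⟩ := Metric.continuous_iff.1 hωc 0 (η / 2) (half_pos hη0)
  set ε := min (s / 2) (min (δ₁ / 2) (δ₂ / 2)) with hε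
  have hε0 : 0 < ε := by positivity
  have hεs : ε ≤ s / 2 := min_le_left _ _
  have hε1 : ε < δ₁ := ((min_le_right _ _).trans (min_le_left _ _)).trans_lt (half_lt_self hδ₁)
  have hε2 : ε < δ₂ := ((min_le_right _ _).trans (min_le_right _ _)).trans_lt (half_lt_self hδ₂)
  have hωε : ω ε < α + η / 2 := by
    have := H2 ε (by rw [Real.dist_eq, sub_zero, abs_of_pos hε0]; exact hε2)
    rw [Real.dist_eq, hω0] at this
    linarith [(abs_lt.1 this).2]
  have hsub : Icc ε s ⊆ Icc 0 s := Icc_subset_Icc hε0.le le_rfl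
  have hpos : ∀ t ∈ Icc ε s, 0 < t := fun t ht => hε0.trans_le ht.1
  obtain ⟨c, hz⟩ := linSol_of_sols (isSolOn_mono husol hpos)
    (isSolOn_mono hW (subset_univ (Icc ε s))) hΛ
    (fun x t ht => ⟨(hub x t (hpos t ht)).1, (hub x t (hpos t ht)).2.trans (hB' t (hsub ht))⟩)
    (fun x t ht => ⟨(hWb x t).1, (hWb x t).2.trans (hB' t (hsub ht))⟩)
    (fun t ht => hL t (hsub ht))
  set T := s - ε with hT
  have hT0 : 0 < T := by linarith
  have hTs : T ≤ s := by linarith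
  have hζB : ∀ x, |u x ε - W x ε| ≤ B := fun x => by
    have a1 := hub x ε hε0
    have a2 := hWb x ε
    have a3 := hB' ε ⟨hε0.le, by linarith⟩
    rw [abs_le]
    constructor <;> linarith
  have key := hz.almost_sign hT0 (a := a) (η := η) (C := C) (D := 2 * B * ρ) (ς := ρ ^ 2)
    (by positivity)
    (g := fun x => if x ≤ a then max (u x ε - W x ε) 0 else min (u x ε - W x ε) 0)
    (fun x y hxy => by
      rintro ⟨h1, h2⟩
      split_ifs at h1 h2 with k1 k2
      · exact absurd h1 (not_lt.2 (le_max_right _ _))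
      · exact absurd h1 (not_lt.2 (le_max_right _ _))
      · linarith
      · exact absurd h2 (not_lt.2 (min_le_right _ _)))
    (fun x => by
      rw [mul_zero, exp_zero, one_mul, add_zero]
      set ζ := u x ε - W x ε with hζ
      have hg0 := (gauss_pos (ρ ^ 2) a x 0).le
      have hsplit : |ζ - if x ≤ a then max ζ 0 else min ζ 0| ≤ |ζ| := by
        split_ifs
        · rcases le_total ζ 0 with h | h
          · rw [max_eq_right h, sub_zero]
          · rw [max_eq_left h, sub_self, abs_zero]; exact abs_nonneg _
        · rcases le_total ζ 0 with h | h
          · rw [min_eq_left h, sub_self, abs_zero]; exact abs_nonneg _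
          · rw [min_eq_right h, sub_zero]
      have t1 : 0 ≤ C * (x - a) ^ 2 := by positivity
      have t2 : 0 ≤ 2 * B * ρ * gauss (ρ ^ 2) a x 0 := by positivity
      by_cases hx1 : |x - a| ≤ ρ
      · have := half_inv_le_gauss hρ0 hx1
        have h2 := hsplit.trans (hζB x)
        nlinarith
      by_cases hx2 : R ≤ |x - a|
      · have h2 := hsplit.trans (hζB x)
        have h3 : B / C ≤ (x - a) ^ 2 := by
          rw [← sq_abs (x - a)]
          exact (Real.sqrt_le_left (abs_nonneg _)).1 hx2
        rw [div_le_iff₀ hC0] at h3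
        linarith
      · rw [not_le] at hx1 hx2
        have a1 := hub x ε hε0
        have a2 := hWb x ε
        rw [abs_lt] at hx2
        refine le_trans (b := η) ?_ (by linarith)
        rcases le_or_gt x a with hxa | hxa
        · rw [abs_of_nonpos (by linarith)] at hx1
          have := H1 ε ⟨hε0, hε1⟩ x (Or.inl ⟨by linarith, by linarith⟩)
          rw [if_pos (by linarith), mul_one] at this
          rw [if_pos hxa]
          have := (abs_lt.1 this).1
          rcases le_total ζ 0 with h | h
          · rw [max_eq_right h, sub_zero, abs_of_nonpos h]; linarith
          · rw [max_eq_left h, sub_self, abs_zero]; exact hη0.le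
        · rw [abs_of_pos (by linarith)] at hx1
          have := H1 ε ⟨hε0, hε1⟩ x (Or.inr ⟨by linarith, by linarith⟩)
          rw [if_neg (by linarith), mul_zero, sub_zero] at this
          rw [if_neg (by linarith)]
          have := (abs_lt.1 this).2
          rcases le_total ζ 0 with h | h
          · rw [min_eq_left h, sub_self, abs_zero]; exact hη0.le
          · rw [min_eq_right h, sub_zero, abs_of_nonneg h]; linarith) hxy
  have hQT : exp (2 * (2 * Λ) * T) ≤ Q := exp_le_exp.2 (by gcongr)
  have hgG : ∀ x, gauss (ρ ^ 2) a x T ≤ G := fun x => by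
    unfold gauss
    rw [hG, exp_le_exp, neg_div]
    have h1 : log (s / 2) ≤ log (ρ ^ 2 + T) := log_le_log (by positivity) (by
      have := sq_nonneg ρ
      linarith)
    have h2 : 0 ≤ (x - a) ^ 2 / (4 * (ρ ^ 2 + T)) := by positivity
    linarith
  have hsmall : ∀ v, (v - a) ^ 2 ≤ max ((x - a) ^ 2) ((y - a) ^ 2) →
      exp (2 * (2 * Λ) * T) * (η + C * ((v - a) ^ 2 + 2 * T)
        + 2 * B * ρ * gauss (ρ ^ 2) a v T) < m := fun v hv => by
    have hg0 := (gauss_pos (ρ ^ 2) a v T).le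
    have hg1 := hgG v
    calc _ ≤ Q * (η + C * X + 2 * B * ρ * G) := by
          rw [hX]
          gcongr
      _ = 3 / 4 * m := by
          rw [hη, hC, hρ]; field_simp; ring
      _ < m := by linarith
  have hexp : 1 ≤ exp (Λ * T) := one_le_exp (by positivity)
  have eT : ε + T = s := by rw [hT]; ring
  rw [eT] at key
  refine key ⟨?_, ?_⟩
  · have h1 := hsmall x (le_max_left _ _)
    have h2 : m ≤ -(u x s - W x s) := min_le_left _ _
    have h3 : exp (Λ * T) * (u x s - W x s) ≤ 1 * (u x s - W x s) :=
      mul_le_mul_of_nonpos_right hexp hx.le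
    linarith
  · have h1 := hsmall y (le_max_right _ _)
    have h2 : m ≤ u y s - W y s := min_le_right _ _
    have h3 : 1 * (u y s - W y s) ≤ exp (Λ * T) * (u y s - W y s) :=
      mul_le_mul_of_nonneg_right hexp hy.le
    linarith

/-! ### Conclusion -/

/-- Two bounded entire solutions whose difference never passes from negative to positive either
coincide or cross with `u` strictly steeper. If the slopes at a crossing at time `t₁` are not strictly
ordered, then `LinSol.strict_slope` and `LinSol.strict_pos` force equality at all times before `t₁`,
and uniqueness extends it to later times. -/
lemma eq_or_steeper {f : ℝ → ℝ → ℝ} {ω : ℝ → ℝ} {u W : ℝ → ℝ → ℝ}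
    (hf : ContDiff ℝ 2 (Function.uncurry f)) (hωc : Continuous ω)
    (hu : IsSolOn f u univ) (hW : IsSolOn f W univ)
    (hub : ∀ x t, 0 ≤ u x t ∧ u x t ≤ ω t) (hWb : ∀ x t, 0 ≤ W x t ∧ W x t ≤ ω t)
    (hS : ∀ t x y, x < y → ¬(u x t - W x t < 0 ∧ 0 < u y t - W y t))
    {x₁ t₁ : ℝ} (heq : u x₁ t₁ = W x₁ t₁) :
    (∀ x t, u x t = W x t) ∨ deriv (fun y => u y t₁) x₁ < deriv (fun y => W y t₁) x₁ := by
  by_cases hlt : deriv (fun y => u y t₁) x₁ < deriv (fun y => W y t₁) x₁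
  · exact Or.inr hlt
  left
  have hdu : DifferentiableAt ℝ (fun y => u y t₁) x₁ := by
    obtain ⟨_, _, _, _, h, _⟩ := hu
    exact (h x₁ t₁ trivial).differentiableAt
  have hdW : DifferentiableAt ℝ (fun y => W y t₁) x₁ := by
    obtain ⟨_, _, _, _, h, _⟩ := hW
    exact (h x₁ t₁ trivial).differentiableAt
  have lin : ∀ s t : ℝ, ∃ Λ K M c c', 0 ≤ Λ ∧
      LinSol K M (t - s) (fun x τ => exp (Λ * τ) * (u x (s + τ) - W x (s + τ))) c ∧
      LinSol K M (t - s) (fun x τ => exp (Λ * τ) * (W x (s + τ) - u x (s + τ))) c' := by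
    intro s t
    obtain ⟨B, hB⟩ := (isCompact_Icc (a := s) (b := t)).exists_bound_of_continuousOn
      hωc.continuousOn
    have hB' : ∀ τ ∈ Icc s t, ω τ ≤ B := fun τ hτ => (le_abs_self _).trans (hB τ hτ)
    obtain ⟨Λ, hΛ, hL⟩ := exists_lipschitz hf s t B
    have u1 := isSolOn_mono hu (subset_univ (Icc s t))
    have w1 := isSolOn_mono hW (subset_univ (Icc s t))
    have u2 : ∀ x, ∀ τ ∈ Icc s t, u x τ ∈ Icc 0 B := fun x τ hτ =>
      ⟨(hub x τ).1, (hub x τ).2.trans (hB' τ hτ)⟩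
    have w2 : ∀ x, ∀ τ ∈ Icc s t, W x τ ∈ Icc 0 B := fun x τ hτ =>
      ⟨(hWb x τ).1, (hWb x τ).2.trans (hB' τ hτ)⟩
    obtain ⟨c, hc⟩ := linSol_of_sols u1 w1 hΛ u2 w2 hL
    obtain ⟨c', hc'⟩ := linSol_of_sols w1 u1 hΛ w2 u2 hL
    exact ⟨Λ, _, _, c, c', hΛ, hc, hc'⟩
  have past : ∀ s < t₁, ∀ x, u x s = W x s := by
    intro s hs
    obtain ⟨Λ, K, M, c, c', hΛ, hz, hz'⟩ := lin s t₁
    have hT : 0 < t₁ - s := sub_pos.2 hs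
    have e0 : ∀ x, exp (Λ * 0) * (u x (s + 0) - W x (s + 0)) = u x s - W x s := fun x => by simp
    have e0' : ∀ x, exp (Λ * 0) * (W x (s + 0) - u x (s + 0)) = W x s - u x s := fun x => by simp
    have eT : s + (t₁ - s) = t₁ := by ring
    by_cases hp : ∃ p, 0 < u p s - W p s
    · obtain ⟨p, hp⟩ := hp
      exfalso
      by_cases hq : ∃ q, u q s - W q s < 0
      · obtain ⟨q, hq⟩ := hq
        have hpq : p < q := by
          rcases lt_trichotomy p q with h | h | h
          · exact h
          · subst h; linarith
          · exact absurd ⟨hq, hp⟩ (hS s q p h)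
        have hd := hz.strict_slope hT (fun x y hxy => by
            simp only [e0]; exact hS s x y hxy) hpq (by simpa only [e0] using hp)
          (by simpa only [e0] using hq) (x₁ := x₁)
          (d := exp (Λ * (t₁ - s)) * (deriv (fun y => u y t₁) x₁ - deriv (fun y => W y t₁) x₁))
          (by simp only [eT]; rw [heq, sub_self, mul_zero])
          (by simp only [eT]; exact (hdu.hasDerivAt.sub hdW.hasDerivAt).const_mul _)
        exact absurd hd (not_lt.2 (mul_nonneg (exp_pos _).le (by linarith)))
      · push Not at hq
        have := hz.strict_pos hT (fun x => by simpa only [e0] using hq x) (p := p)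
          (by simpa only [e0] using hp) x₁
        simp only [eT] at this
        rw [heq, sub_self, mul_zero] at this
        exact lt_irrefl _ this
    · push Not at hp
      intro x
      by_contra hne
      have hx : 0 < W x s - u x s := by
        have : u x s - W x s ≠ 0 := sub_ne_zero.2 hne
        have := lt_of_le_of_ne (hp x) this
        linarith
      have := hz'.strict_pos hT (fun x => by
        simp only [e0']; linarith [hp x]) (p := x) (by simpa only [e0'] using hx) x₁
      simp only [eT] at this
      rw [heq, sub_self, mul_zero] at this
      exact lt_irrefl _ this
  intro x t
  rcases lt_or_ge t t₁ with h | h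
  · exact past t h x
  · obtain ⟨Λ, K, M, c, c', hΛ, hz, hz'⟩ := lin (t₁ - 1) t
    have hT : 0 < t - (t₁ - 1) := by linarith
    have := hz.eq_zero hT (fun x => by
      simp [past (t₁ - 1) (by linarith) x]) x
    have eT : t₁ - 1 + (t - (t₁ - 1)) = t := by ring
    simp only [eT] at this
    exact sub_eq_zero.1 ((mul_eq_zero.1 this).resolve_left (exp_pos _).ne')

end ZeroNumber

/-- **Lemma 2.8.** Every ω-limit orbit of the Heaviside-type solution `ũ(·,·;a)` is steeper
than any entire solution `w` of (E) with `0 ≤ w ≤ ω(α,·)`. -/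
theorem omega_limit_orbit_steeper
    (f : ℝ → ℝ → ℝ) (T α : ℝ) (ωsol : ℝ → ℝ → ℝ)
    (hT : 0 < T)
    (hf : ContDiff ℝ 2 (Function.uncurry f))
    (hfper : ∀ t u : ℝ, f (t + T) u = f t u)
    (hf0 : ∀ t : ℝ, f t 0 = 0)
    (hωinit : ∀ β : ℝ, ωsol β 0 = β)
    (hωode : ∀ β t : ℝ, HasDerivAt (ωsol β) (f t (ωsol β t)) t)
    (hα : 0 < α) (hαfix : ωsol α T = α)
    (hαper : ∀ t : ℝ, ωsol α (t + T) = ωsol α t)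
    (hαpos : ∀ t : ℝ, 0 < ωsol α t)
    (a : ℝ) (u w₁ : ℝ → ℝ → ℝ)
    (hu : IsHeavisideSol f α a (ωsol α) u)
    (hw₁ : IsOmegaLimitOrbit f T u w₁) :
    ∀ w : ℝ → ℝ → ℝ, IsSolOn f w Set.univ →
      (∀ x t : ℝ, 0 ≤ w x t ∧ w x t ≤ ωsol α t) →
      Steeper T w₁ w := by
  intro w hw hwb t' x₁ k heq
  obtain ⟨hw₁sol, xj, kj, hkj, hlim⟩ := hw₁
  have hωc : Continuous (ωsol α) :=
    continuous_iff_continuousAt.2 fun t => (hωode α t).continuousAt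
  have hωper : ∀ (n : ℤ) (t : ℝ), ωsol α (t + n * T) = ωsol α t := fun n t =>
    Function.Periodic.int_mul (f := ωsol α) hαper n t
  have hfper' : ∀ (n : ℤ) (t v : ℝ), f (t + n * T) v = f t v := fun n t v =>
    Function.Periodic.int_mul (f := fun t => f t v) (fun t => hfper t v) n t
  -- all space-time translates of `w` by integer multiples of the period are admissible
  have hshift : ∀ (y : ℝ) (n : ℤ), IsSolOn f (fun x t => w (x + y) (t + n * T)) univ ∧
      ∀ x t, 0 ≤ w (x + y) (t + n * T) ∧ w (x + y) (t + n * T) ≤ ωsol α t := fun y n =>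
    ⟨ZeroNumber.isSolOn_shift hw y (n * T) (fun _ _ => trivial) (hfper' n),
      fun x t => ⟨(hwb _ _).1, (hwb _ _).2.trans_eq (hωper n t)⟩⟩
  have hpt : ∀ x t, Tendsto (fun j => u (x + xj j) (t + (kj j : ℝ) * T)) atTop (𝓝 (w₁ x t)) := by
    intro x t
    rw [Metric.tendsto_atTop]
    intro ε hε
    obtain ⟨J, hJ⟩ := hlim {(x, t)} isCompact_singleton ε hε
    exact ⟨J, fun j hj => (hJ j hj (x, t) rfl).1⟩
  have htime : ∀ t : ℝ, ∀ᶠ j in atTop, 0 < t + (kj j : ℝ) * T := fun t =>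
    ((tendsto_atTop_add_const_left _ t
      ((tendsto_intCast_atTop_atTop.comp hkj).atTop_mul_const hT)).eventually_gt_atTop 0)
  have hw₁b : ∀ x t, 0 ≤ w₁ x t ∧ w₁ x t ≤ ωsol α t := fun x t =>
    ⟨ge_of_tendsto (hpt x t) ((htime t).mono fun j hj => (hu.2.1 _ _ hj).1),
      le_of_tendsto (hpt x t) ((htime t).mono fun j hj =>
        (hu.2.1 _ _ hj).2.trans_eq (hωper _ _))⟩
  have hS : ∀ t x y, x < y → ¬(w₁ x t - w (x + 0) (t + k * T) < 0 ∧
      0 < w₁ y t - w (y + 0) (t + k * T)) := by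
    rintro t x y hxy ⟨hx, hy⟩
    obtain ⟨j, ⟨h1, h2⟩, h3⟩ := (((((hpt x t).sub_const _).eventually (gt_mem_nhds hx)).and
      (((hpt y t).sub_const _).eventually (lt_mem_nhds hy))).and (htime t)).exists
    have hs := hshift (-xj j) (k - kj j)
    refine ZeroNumber.heaviside_sign hf hωc (hωinit α) hα hu hs.1 hs.2 h3
      (add_lt_add_left hxy (xj j)) ?_
    have e : t + (kj j : ℝ) * T + ((k - kj j : ℤ) : ℝ) * T = t + k * T := by push_cast; ring
    rw [e, add_neg_cancel_right, add_neg_cancel_right]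
    rw [add_zero] at h1 h2
    exact ⟨h1, h2⟩
  rcases ZeroNumber.eq_or_steeper hf hωc hw₁sol (hshift 0 k).1 hw₁b (hshift 0 k).2 hS
    (x₁ := x₁) (t₁ := t') (by simpa using heq) with h | h
  · left
    intro x t
    simpa using h x (t + t')
  · right
    simpa using h

end
end

section
/- Let M = max_{t∈[0,T]} ω(α,t) and let K > 0 satisfy K ≥ max_{t∈[0,T], 0≤u≤M} |∂_u f(t,u)| (so that |f(t,u)| ≤ K u for all t ∈ ℝ and 0 ≤ u ≤ M). Then for every a ∈ ℝ, every x ∈ ℝ and every t > 0, ũ(x,t;a) ≤ min{ ω(α,t), α·e^{−√K (x − 2√K t − a)} }. In particular, for every c > 2√K, sup_{x ≥ ct} ũ(x,t;a) → 0 as t → ∞. -/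
/-!
Write `λ = √K`. Since `f(t,0) = 0` and `|∂_u f| ≤ K` on `[0,T] × [0,M]`, periodicity and the mean
value theorem give `f(t,u) ≤ K u` for all `t` and `0 ≤ u ≤ M` (`reaction_le_linear`). Hence `ũ` is
a subsolution of the linear equation `z_t = z_xx + K z`, of which
`v(x,t) = α e^{-λ(x - 2λt - a)}` is an exact solution, and the estimate is a comparison principle.

Comparison is made on the unbounded line with a discontinuous initial datum. Unboundedness is
handled by the barrier `B(x,t) = ε (1 + (x-a)²) e^{(K+3)t}`, which satisfies
`B_t - B_xx - K B ≥ B > 0` and exceeds the bound `M` of `ũ` for `|x - a|` large. The discontinuity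
at `(a,0)` is harmless: there `ũ ≤ ω(α,t) → α = v(a,0)`, so `ũ < v + B` for small `t`, uniformly on
bounded sets of `x` (`initial_comparison`). If `w = ũ - v - B` were nonnegative somewhere, then
`e^{-Kt} w` would have a nonnegative maximum over a compact rectangle, attained away from
its lateral sides and its bottom; the inequalities `w_xx ≤ 0` and `w_t - K w ≥ 0` there contradict
`w_t - K w ≤ w_xx - B` (`no_nonneg_point`). Letting `ε → 0` gives `ũ ≤ v`, and the
spreading statement follows because `v(x,t) ≤ α e^{-λ((c - 2λ)t - a)}` when `x ≥ ct`.
-/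

open Real Filter Topology Set

noncomputable section

/-! ### One-variable calculus at a maximum -/

lemma second_deriv_nonpos_of_isLocalMax {g g' : ℝ → ℝ} {g'' x : ℝ}
    (hg : ∀ y, HasDerivAt g (g' y) y) (hg' : HasDerivAt g' g'' x) (hmax : IsLocalMax g x) :
    g'' ≤ 0 := by
  by_contra! hpos
  have hd : deriv g = g' := funext fun y => (hg y).deriv
  have hmin : IsLocalMin g x := by
    apply isLocalMin_of_deriv_deriv_pos
    · rw [hd, hg'.deriv]; exact hpos
    · exact hmax.deriv_eq_zero
    · exact (hg x).continuousAt
  -- `g` is both locally maximal and locally minimal, hence locally constant.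
  have hconst : g =ᶠ[𝓝 x] fun _ => g x := by
    filter_upwards [hmax, hmin] with y h1 h2 using le_antisymm h1 h2
  have h0 : g' =ᶠ[𝓝 x] fun _ => 0 := by
    have := hconst.deriv
    rw [hd] at this
    simpa using this
  have : g'' = 0 := by
    rw [← hg'.deriv, h0.deriv_eq]; simp
  linarith

lemma deriv_nonneg_of_left_max {q : ℝ → ℝ} {q' d t : ℝ} (hq : HasDerivAt q q' t) (hdt : d < t)
    (hmax : ∀ s ∈ Set.Icc d t, q s ≤ q t) : 0 ≤ q' := by
  by_contra! hneg
  have h1 : ∀ᶠ s in 𝓝[<] t, slope q t s < 0 :=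
    ((hasDerivAt_iff_tendsto_slope.1 hq).mono_left
      (nhdsWithin_mono _ fun s (hs : s < t) => hs.ne)).eventually (gt_mem_nhds hneg)
  have h2 : ∀ᶠ s in 𝓝[<] t, s ∈ Set.Ioo d t := Ioo_mem_nhdsLT hdt
  obtain ⟨s, hs1, hs2⟩ := (h1.and h2).exists
  rw [slope_def_field, div_neg_iff] at hs1
  have := hmax s ⟨hs2.1.le, hs2.2.le⟩
  rcases hs1 with h | h
  · linarith [h.1]
  · linarith [h.2, hs2.2]

/-! ### Structural facts about the equation -/

lemma continuousOn_of_isSolOn {f u : ℝ → ℝ → ℝ} (h : IsSolOn f u (Set.Ioi 0)) :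
    ContinuousOn (fun p : ℝ × ℝ => u p.1 p.2) (Set.univ ×ˢ Set.Ioi 0) := by
  obtain ⟨ut, ux, uxx, hut, hux, -, cut, cux, -⟩ := h
  intro p hp
  have hopen : (Set.univ ×ˢ Set.Ioi 0 : Set (ℝ × ℝ)) ∈ 𝓝 p :=
    (isOpen_univ.prod isOpen_Ioi).mem_nhds hp
  have key := hasStrictFDerivAt_uncurry_coprod (𝕜 := ℝ) (u := p) (f := u)
    (f₁ := fun x t => ContinuousLinearMap.toSpanSingleton ℝ (ux x t))
    (f₂ := fun x t => ContinuousLinearMap.toSpanSingleton ℝ (ut x t))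
    (by filter_upwards [hopen] with v hv using (hux v.1 v.2 hv.2).hasFDerivAt)
    (by filter_upwards [hopen] with v hv using (hut v.1 v.2 hv.2).hasFDerivAt)
    ((ContinuousLinearMap.toSpanSingletonCLE (𝕜 := ℝ) (E := ℝ)).continuous.continuousAt.comp
      (cux.continuousAt hopen))
    ((ContinuousLinearMap.toSpanSingletonCLE (𝕜 := ℝ) (E := ℝ)).continuous.continuousAt.comp
      (cut.continuousAt hopen))
  exact key.continuousAt.continuousWithinAt

/-- The derivative bound over one period gives the linear bound on the reaction term at all
times. -/
lemma reaction_le_linear {f : ℝ → ℝ → ℝ} {T M K : ℝ} (hT : 0 < T)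
    (hf : ContDiff ℝ 2 (Function.uncurry f))
    (hfper : ∀ t u : ℝ, f (t + T) u = f t u) (hf0 : ∀ t : ℝ, f t 0 = 0)
    (hKbd : ∀ t ∈ Set.Icc 0 T, ∀ v ∈ Set.Icc 0 M, |deriv (fun w => f t w) v| ≤ K)
    (t v : ℝ) (hv : v ∈ Set.Icc 0 M) : f t v ≤ K * v := by
  have hper : Function.Periodic f T := fun t => funext fun u => hfper t u
  obtain ⟨s, hs, hst⟩ := hper.exists_mem_Ico₀ hT t
  rw [hst]
  have hdiff : Differentiable ℝ (fun w => f s w) := by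
    have h1 : Differentiable ℝ (Function.uncurry f) := hf.differentiable (by norm_num)
    exact h1.comp (by fun_prop : Differentiable ℝ fun w : ℝ => (s, w))
  have := (convex_Icc (0 : ℝ) M).image_sub_le_mul_sub_of_deriv_le (f := fun w => f s w)
    hdiff.continuous.continuousOn hdiff.differentiableOn (C := K)
    (fun x hx => (abs_le.1 (hKbd s ⟨hs.1, hs.2.le⟩ x (interior_subset hx))).2)
    0 ⟨le_rfl, hv.1.trans hv.2⟩ v hv hv.1
  simpa [hf0] using this

/-! ### Comparison with the exponential supersolution -/

/-- Near the initial time the solution lies below `v + ε` on the ball of radius `R` about `a`; the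
jump at `a` is covered by the bound `u ≤ ω` together with `ω(0) = α`. -/
lemma initial_comparison {f u : ℝ → ℝ → ℝ} {α a l ε R : ℝ} {ω : ℝ → ℝ} (hα : 0 < α) (hl : 0 < l)
    (hε : 0 < ε) (hω : ContinuousAt ω 0) (hω0 : ω 0 = α) (hu : IsHeavisideSol f α a ω u) :
    ∃ δ > 0, ∀ t ∈ Set.Ioo (0 : ℝ) δ, ∀ x, |x - a| ≤ R →
      u x t < α * Real.exp (-l * (x - 2 * l * t - a)) + ε := by
  obtain ⟨-, hbd, hinit⟩ := hu
  obtain ⟨η, hη, hηε⟩ : ∃ η > 0, α - ε / 2 < α * Real.exp (-l * η) := by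
    have hc : ContinuousAt (fun η : ℝ => α * Real.exp (-l * η)) 0 := by fun_prop
    have := hc.eventually (lt_mem_nhds (a := α - ε / 2) (by simp; linarith))
    obtain ⟨r, hr, h⟩ := Metric.eventually_nhds_iff.1 this
    exact ⟨r / 2, by positivity, h (by simp [abs_of_pos hr]; linarith)⟩
  obtain ⟨δ₁, hδ₁, h1⟩ := Metric.eventually_nhds_iff.1
    (hω.eventually (gt_mem_nhds (show ω 0 < α + ε / 2 by linarith)))
  obtain ⟨δ₂, hδ₂, h2⟩ := hinit (Set.Icc (a + η) (a + R)) isCompact_Icc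
    (fun h => by linarith [h.1]) ε hε
  refine ⟨min δ₁ δ₂, lt_min hδ₁ hδ₂, fun t ht x hx => ?_⟩
  have htpos : 0 < t := ht.1
  rcases le_or_gt x (a + η) with hxa | hxa
  · have hu1 : u x t < α + ε / 2 := by
      refine ((hbd x t htpos).2).trans_lt (h1 ?_)
      rw [Real.dist_eq, sub_zero, abs_of_pos htpos]
      exact ht.2.trans_le (min_le_left _ _)
    have : Real.exp (-l * η) ≤ Real.exp (-l * (x - 2 * l * t - a)) := by
      apply Real.exp_le_exp.2
      have : 0 ≤ l * (a + η - x) := mul_nonneg hl.le (by linarith)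
      have : 0 ≤ l * (l * t) := by positivity
      nlinarith
    have := mul_le_mul_of_nonneg_left this hα.le
    linarith
  · have hx2 := h2 t ⟨ht.1, ht.2.trans_le (min_le_right _ _)⟩ x
      ⟨hxa.le, by linarith [(abs_le.1 hx).2]⟩
    rw [if_neg (by linarith), mul_zero, sub_zero] at hx2
    have := (abs_lt.1 hx2).2
    have : 0 < α * Real.exp (-l * (x - 2 * l * t - a)) := by positivity
    linarith

/-- Maximum principle: `u - v - B` is negative everywhere, where `v` is the exponential solution of
the linear equation with `K = l²` and `B` is the quadratic barrier. -/
lemma no_nonneg_point {f u : ℝ → ℝ → ℝ} {α a l ε M : ℝ} {ω : ℝ → ℝ} (hα : 0 < α) (hl : 0 < l)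
    (hε : 0 < ε) (hω : ContinuousAt ω 0) (hω0 : ω 0 = α) (hM : ∀ t, ω t ≤ M)
    (hf : ∀ t, ∀ v ∈ Set.Icc 0 M, f t v ≤ l ^ 2 * v)
    (hu : IsHeavisideSol f α a ω u) (x₁ t₁ : ℝ) (ht₁ : 0 < t₁) :
    u x₁ t₁ < α * Real.exp (-l * (x₁ - 2 * l * t₁ - a)) +
      ε * (1 + (x₁ - a) ^ 2) * Real.exp ((l ^ 2 + 3) * t₁) := by
  by_contra! hcon
  have hMpos : 0 < M := by have := hM 0; linarith
  set v : ℝ → ℝ → ℝ := fun x t => α * Real.exp (-l * (x - 2 * l * t - a)) with hv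
  set B : ℝ → ℝ → ℝ := fun x t => ε * (1 + (x - a) ^ 2) * Real.exp ((l ^ 2 + 3) * t) with hB
  have hvpos : ∀ x t, 0 < v x t := fun x t => by simp only [hv]; positivity
  have hBpos : ∀ x t, 0 < B x t := fun x t => by simp only [hB]; positivity
  have hBge : ∀ x t, 0 < t → ε * (1 + (x - a) ^ 2) ≤ B x t := fun x t ht => by
    simp only [hB]
    exact le_mul_of_one_le_right (by positivity) (Real.one_le_exp (by positivity))
  -- Outside the ball of radius `R` the barrier alone exceeds the bound `M` of `u`.
  obtain ⟨R, hR, hRM⟩ : ∃ R : ℝ, 0 < R ∧ M < ε * (1 + R ^ 2) := by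
    refine ⟨1 + M / ε, by positivity, ?_⟩
    have : 0 < M / ε := by positivity
    have h3 : ε * (M / ε) = M := by field_simp
    nlinarith [mul_pos hε this, sq_nonneg (M / ε)]
  have hfar : ∀ x t, 0 < t → R ≤ |x - a| → u x t < v x t + B x t := fun x t ht hx => by
    have h1 := (hu.2.1 x t ht).2.trans (hM t)
    have h2 : R ^ 2 ≤ (x - a) ^ 2 := by
      rw [← sq_abs (x - a)]; gcongr
    have h3 := hBge x t ht
    have h4 := hvpos x t
    nlinarith [mul_le_mul_of_nonneg_left h2 hε.le]
  obtain ⟨δ, hδ, hinit⟩ := initial_comparison (R := R) hα hl hε hω hω0 hu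
  have hnear : ∀ t ∈ Set.Ioo (0 : ℝ) δ, ∀ x, u x t < v x t + B x t := fun t ht x => by
    rcases le_or_gt R |x - a| with h | h
    · exact hfar x t ht.1 h
    · have h1 := hinit t ht x h.le
      have h2 := hBge x t ht.1
      have : 0 ≤ ε * (x - a) ^ 2 := by positivity
      simp only [hv]
      linarith
  have hδt : δ ≤ t₁ := by
    by_contra! h
    exact absurd (hnear t₁ ⟨ht₁, h⟩ x₁) (not_lt.2 hcon)
  set Q : ℝ × ℝ → ℝ := fun p =>
    Real.exp (-l ^ 2 * p.2) * (u p.1 p.2 - v p.1 p.2 - B p.1 p.2) with hQ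
  have hcu := continuousOn_of_isSolOn hu.1
  set S : Set (ℝ × ℝ) := Set.Icc (a - R) (a + R) ×ˢ Set.Icc (δ / 2) t₁ with hS
  have hcQ : ContinuousOn Q S := by
    have hsub : S ⊆ Set.univ ×ˢ Set.Ioi 0 := fun p hp =>
      ⟨trivial, lt_of_lt_of_le (by positivity) hp.2.1⟩
    have h1 : Continuous fun p : ℝ × ℝ => v p.1 p.2 := by simp only [hv]; fun_prop
    have h2 : Continuous fun p : ℝ × ℝ => B p.1 p.2 := by simp only [hB]; fun_prop
    have h3 : Continuous fun p : ℝ × ℝ => Real.exp (-l ^ 2 * p.2) := by fun_prop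
    exact h3.continuousOn.mul
      (((hcu.mono hsub).sub h1.continuousOn).sub h2.continuousOn)
  have hx₁ : |x₁ - a| < R := by
    by_contra! h
    exact absurd (hfar x₁ t₁ ht₁ h) (not_lt.2 hcon)
  have hmem₁ : (x₁, t₁) ∈ S := by
    rw [abs_lt] at hx₁
    exact ⟨⟨by dsimp; linarith [hx₁.1], by dsimp; linarith [hx₁.2]⟩,
      ⟨by dsimp; linarith, le_rfl⟩⟩
  obtain ⟨⟨y, s⟩, hys, hmax⟩ :=
    (isCompact_Icc.prod isCompact_Icc : IsCompact S).exists_isMaxOn ⟨_, hmem₁⟩ hcQ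
  have hspos : 0 < s := lt_of_lt_of_le (by positivity) hys.2.1
  have hw0 : v y s + B y s ≤ u y s := by
    have h1 : Q (x₁, t₁) ≤ Q (y, s) := hmax hmem₁
    have h2 : 0 ≤ Q (x₁, t₁) := by
      simp only [hQ]
      exact mul_nonneg (Real.exp_pos _).le (by simp only [hv, hB]; linarith)
    have h3 := nonneg_of_mul_nonneg_right (h2.trans h1) (Real.exp_pos _)
    dsimp only at h3
    linarith
  -- The maximum point avoids the lateral sides and the bottom of the rectangle.
  have hy : |y - a| < R := by
    by_contra! h
    exact absurd (hfar y s hspos h) (not_lt.2 hw0)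
  have hs : δ / 2 < s := by
    by_contra! h
    exact absurd (hnear s ⟨hspos, by linarith⟩ y) (not_lt.2 hw0)
  obtain ⟨ut, ux, uxx, hut, hux, huxx, -, -, -, heq⟩ := hu.1
  -- Spatial derivatives of `u - v - B`.
  have hd1 : ∀ x, HasDerivAt (fun x => u x s - v x s - B x s)
      (ux x s - (-l) * v x s - ε * (2 * (x - a)) * Real.exp ((l ^ 2 + 3) * s)) x := fun x => by
    have h1 : HasDerivAt (fun x => v x s) ((-l) * v x s) x := by
      have : HasDerivAt (fun x : ℝ => -l * (x - 2 * l * s - a)) (-l * 1) x :=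
        (((hasDerivAt_id x).sub_const _).sub_const _).const_mul _
      refine HasDerivAt.congr_deriv (this.exp.const_mul α) ?_
      simp only [hv]; ring
    have h2 : HasDerivAt (fun x => B x s)
        (ε * (2 * (x - a)) * Real.exp ((l ^ 2 + 3) * s)) x := by
      have : HasDerivAt (fun x : ℝ => 1 + (x - a) ^ 2) (2 * (x - a)) x := by
        have := (((hasDerivAt_id x).sub_const a).pow 2).const_add 1
        refine HasDerivAt.congr_deriv this ?_
        simp
      exact (this.const_mul ε).mul_const _
    exact ((hux x s hspos).sub h1).sub h2
  have hd2 : HasDerivAt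
      (fun x => ux x s - (-l) * v x s - ε * (2 * (x - a)) * Real.exp ((l ^ 2 + 3) * s))
      (uxx y s - l ^ 2 * v y s - ε * 2 * Real.exp ((l ^ 2 + 3) * s)) y := by
    have h1 : HasDerivAt (fun x => (-l) * v x s) (l ^ 2 * v y s) y := by
      have : HasDerivAt (fun x : ℝ => -l * (x - 2 * l * s - a)) (-l * 1) y :=
        (((hasDerivAt_id y).sub_const _).sub_const _).const_mul _
      refine HasDerivAt.congr_deriv ((this.exp.const_mul α).const_mul (-l)) ?_
      simp only [hv]; ring
    have h2 : HasDerivAt (fun x => ε * (2 * (x - a)) * Real.exp ((l ^ 2 + 3) * s))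
        (ε * 2 * Real.exp ((l ^ 2 + 3) * s)) y := by
      have : HasDerivAt (fun x : ℝ => 2 * (x - a)) 2 y := by
        simpa using ((hasDerivAt_id y).sub_const a).const_mul 2
      exact (this.const_mul ε).mul_const _
    exact ((huxx y s hspos).sub h1).sub h2
  have hlocmax : IsLocalMax (fun x => u x s - v x s - B x s) y := by
    have hnhds : Set.Icc (a - R) (a + R) ∈ 𝓝 y := by
      rw [abs_lt] at hy
      exact Icc_mem_nhds (by linarith [hy.1]) (by linarith [hy.2])
    filter_upwards [hnhds] with x hx
    have : Q (x, s) ≤ Q (y, s) := hmax ⟨hx, hys.2⟩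
    exact le_of_mul_le_mul_left this (Real.exp_pos _)
  have hxx := second_deriv_nonpos_of_isLocalMax hd1 hd2 hlocmax
  -- Time derivative of `e^{-l² t} (u - v - B)`.
  have hdt : HasDerivAt (fun t => Q (y, t))
      (Real.exp (-l ^ 2 * s) * (ut y s - 2 * l ^ 2 * v y s - (l ^ 2 + 3) * B y s
        - l ^ 2 * (u y s - v y s - B y s))) s := by
    have h1 : HasDerivAt (fun t => v y t) (2 * l ^ 2 * v y s) s := by
      have : HasDerivAt (fun t : ℝ => -l * (y - 2 * l * t - a)) (2 * l ^ 2) s := by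
        have := ((((hasDerivAt_id s).const_mul (2 * l)).const_sub y).sub_const a).const_mul (-l)
        refine HasDerivAt.congr_deriv this ?_
        ring
      refine HasDerivAt.congr_deriv (this.exp.const_mul α) ?_
      simp only [hv]; ring
    have h2 : HasDerivAt (fun t => B y t) ((l ^ 2 + 3) * B y s) s := by
      have : HasDerivAt (fun t : ℝ => (l ^ 2 + 3) * t) (l ^ 2 + 3) s := by
        simpa using (hasDerivAt_id s).const_mul (l ^ 2 + 3)
      refine HasDerivAt.congr_deriv (this.exp.const_mul (ε * (1 + (y - a) ^ 2))) ?_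
      simp only [hB]; ring
    have h3 : HasDerivAt (fun t : ℝ => Real.exp (-l ^ 2 * t))
        (Real.exp (-l ^ 2 * s) * (-l ^ 2)) s := by
      have : HasDerivAt (fun t : ℝ => -l ^ 2 * t) (-l ^ 2) s := by
        simpa using (hasDerivAt_id s).const_mul (-l ^ 2)
      exact this.exp
    refine HasDerivAt.congr_deriv (h3.mul (((hut y s hspos).sub h1).sub h2)) ?_
    dsimp only
    ring
  have htt := deriv_nonneg_of_left_max hdt hs fun t ht =>
    hmax (show (y, t) ∈ S from ⟨hys.1, ht.1, ht.2.trans hys.2.2⟩)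
  have htime := nonneg_of_mul_nonneg_right htt (Real.exp_pos _)
  have hre := hf s (u y s) ⟨(hu.2.1 y s hspos).1, (hu.2.1 y s hspos).2.trans (hM s)⟩
  rw [heq y s hspos] at htime
  -- `B_xx = 2 ε e^{(l²+3)s} ≤ 2 B`, so the barrier is a strict supersolution.
  have hBxx : ε * 2 * Real.exp ((l ^ 2 + 3) * s) ≤ 2 * B y s := by
    have : 0 ≤ ε * (y - a) ^ 2 * Real.exp ((l ^ 2 + 3) * s) := by positivity
    simp only [hB]
    linarith
  have := hBpos y s
  linarith

/-- Explicit supersolution estimate for the Heaviside-type solution: with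
`M = max_{[0,T]} ω(α,·)` and `K ≥ max |∂_u f|` on `[0,T] × [0,M]`, one has
`ũ(x,t;a) ≤ min{ω(α,t), α e^{−√K (x − 2√K t − a)}}`; in particular the solution spreads to
the right with speed at most `2√K`. -/
theorem exponential_supersolution_bound
    (f : ℝ → ℝ → ℝ) (T α : ℝ) (ωsol : ℝ → ℝ → ℝ)
    (hT : 0 < T)
    (hf : ContDiff ℝ 2 (Function.uncurry f))
    (hfper : ∀ t u : ℝ, f (t + T) u = f t u)
    (hf0 : ∀ t : ℝ, f t 0 = 0)
    (hωinit : ∀ β : ℝ, ωsol β 0 = β)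
    (hωode : ∀ β t : ℝ, HasDerivAt (ωsol β) (f t (ωsol β t)) t)
    (hα : 0 < α) (hαfix : ωsol α T = α)
    (hαper : ∀ t : ℝ, ωsol α (t + T) = ωsol α t)
    (hαpos : ∀ t : ℝ, 0 < ωsol α t)
    (M K : ℝ)
    (hM : ∀ t ∈ Set.Icc 0 T, ωsol α t ≤ M)
    (hMmax : ∃ t₀ ∈ Set.Icc 0 T, ωsol α t₀ = M)
    (hK : 0 < K)
    (hKbd : ∀ t ∈ Set.Icc 0 T, ∀ v ∈ Set.Icc 0 M, |deriv (fun w => f t w) v| ≤ K) :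
    ∀ a : ℝ, ∀ u : ℝ → ℝ → ℝ, IsHeavisideSol f α a (ωsol α) u →
      (∀ x t : ℝ, 0 < t →
        u x t ≤ min (ωsol α t) (α * Real.exp (-Real.sqrt K * (x - 2 * Real.sqrt K * t - a)))) ∧
      (∀ c : ℝ, 2 * Real.sqrt K < c → ∀ ε > 0, ∃ t₀ : ℝ, ∀ t ≥ t₀, ∀ x : ℝ, c * t ≤ x →
        u x t ≤ ε) := by
  intro a u hu
  set l := Real.sqrt K with hl_def
  have hl : 0 < l := Real.sqrt_pos.2 hK
  have hlK : l ^ 2 = K := Real.sq_sqrt hK.le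
  have hMall : ∀ t, ωsol α t ≤ M := fun t => by
    obtain ⟨s, hs, hst⟩ := Function.Periodic.exists_mem_Ico₀ (f := ωsol α) hαper hT t
    rw [hst]
    exact hM s ⟨hs.1, hs.2.le⟩
  have hexp : ∀ x t : ℝ, 0 < t → u x t ≤ α * Real.exp (-l * (x - 2 * l * t - a)) := by
    intro x t ht
    set C := (1 + (x - a) ^ 2) * Real.exp ((l ^ 2 + 3) * t) with hC
    have hCpos : 0 < C := by positivity
    refine le_of_forall_pos_le_add fun ε hε => ?_
    have := no_nonneg_point (ε := ε / C) hα hl (by positivity) (hωode α 0).continuousAt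
      (hωinit α) hMall
      (fun t v hv => hlK ▸ reaction_le_linear hT hf hfper hf0 hKbd t v hv) hu x t ht
    rw [mul_assoc (ε / C), ← hC, div_mul_cancel₀ _ hCpos.ne'] at this
    exact this.le
  refine ⟨fun x t ht => le_min (hu.2.1 x t ht).2 (hexp x t ht), fun c hc ε hε => ?_⟩
  have hlim : Tendsto (fun t : ℝ => α * Real.exp (-l * ((c - 2 * l) * t - a))) atTop (𝓝 0) := by
    have h1 : Tendsto (fun t : ℝ => (c - 2 * l) * t - a) atTop atTop :=
      tendsto_atTop_add_const_right _ _ (tendsto_id.const_mul_atTop (by linarith))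
    have h2 := Real.tendsto_exp_atBot.comp (h1.const_mul_atTop_of_neg (neg_lt_zero.2 hl))
    simpa using h2.const_mul α
  obtain ⟨t₀, ht₀⟩ := eventually_atTop.1
    ((hlim.eventually (gt_mem_nhds hε)).and (eventually_gt_atTop 0))
  refine ⟨t₀, fun t ht x hx => ?_⟩
  obtain ⟨h1, h2⟩ := ht₀ t ht
  refine (hexp x t h2).trans (le_trans ?_ h1.le)
  gcongr α * ?_
  apply Real.exp_le_exp.2
  have : 0 ≤ l * (x - c * t) := mul_nonneg hl.le (by linarith)
  linarith

end
end
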